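/- Assume 𝕋 is bounded and let S be the self-adjoint operator with separated boundary conditions as above. Let z ∈ ℂ \ ℝ, and let (u_a, u_a^[1]) and (u_b, u_b^[1]) be nontrivial solution pairs of (ℓ − z)u = 0 with u_a(σ(a))·cos φ_α − u_a^[1](σ(a))·sin φ_α = 0 and u_b(b)·cos φ_β − u_b^[1](b)·sin φ_β = 0. Then the (constant) Wronskian W(u_b, u_a) is nonzero, and for every f ∈ L²(𝕋_κ; r dσ_κ), the unique element g of the domain of S with (S − z)g = f is given, for dσ_κ-a.e. x ∈ 𝕋_κ, by g(x) = ∫_{𝕋_κ} G_z(x,y)·f(y)·r(y) dσ_κ(y), where G_z(x,y) = W(u_b,u_a)^{-1}·u_a(x)·u_b(y) if x < y and G_z(x,y) = W(u_b,u_a)^{-1}·u_a(y)·u_b(x) if x ≥ y. -/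

import Mathlib

open MeasureTheory Set Filter
open scoped ENNReal NNReal Classical

/-- Forward shift of a time scale. -/
noncomputable def tsSigma (T : Set ℝ) (t : ℝ) : ℝ :=
  if ({s | s ∈ T ∧ t < s}).Nonempty then sInf {s | s ∈ T ∧ t < s} else sSup T

/-- Backward shift of a time scale. -/
noncomputable def tsRho (T : Set ℝ) (t : ℝ) : ℝ :=
  if ({s | s ∈ T ∧ s < t}).Nonempty then sSup {s | s ∈ T ∧ s < t} else sInf T

/-- `𝕋_κ` : the time scale with the left endpoint removed if it is finite and right-scattered. -/
noncomputable def tsKappa (T : Set ℝ) : Set ℝ :=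
  if BddBelow T ∧ sInf T < tsSigma T (sInf T) then T \ {sInf T} else T

/-- Extension `p̄` of a function on `𝕋_κ` to all of `ℝ`. -/
noncomputable def extK (T : Set ℝ) (p : ℝ → ℂ) (t : ℝ) : ℂ :=
  if t ∈ tsKappa T then p t else p (tsSigma (tsKappa T) t)

/-- Coercion of a real-valued coefficient to a complex-valued one. -/
def cR (f : ℝ → ℝ) : ℝ → ℂ := fun t => (f t : ℂ)

/-- `(u, u^[1])` is an integrated pair with density `h` against the measure `μ = dσ_κ`. -/
def IsPair (T : Set ℝ) (μ : Measure ℝ) (p : ℝ → ℂ) (u u1 h : ℝ → ℂ) : Prop :=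
  ∀ c x : ℝ, c ≤ x →
    u x = u c + ∫ t in c..x, u1 t / extK T p t ∧
    u1 x = u1 c + ∫ t in Set.Ioc c x, h t ∂μ

/-- `(u, u^[1])` is a solution pair of `(ℓ - z) u = g`. -/
def IsSLSol (T : Set ℝ) (μ : Measure ℝ) (p r q : ℝ → ℂ) (z : ℂ) (g : ℝ → ℂ)
    (u u1 : ℝ → ℂ) : Prop :=
  IsPair T μ p u u1 (fun t => (q t - z * r t) * u t - r t * g t)

/-- Wronskian of two pairs. -/
def Wr (u u1 v v1 : ℝ → ℂ) (x : ℝ) : ℂ := u x * v1 x - u1 x * v x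

/-- The integrand `|u|² r` as an `ℝ≥0∞`-valued function. -/
noncomputable def sqWeight (r : ℝ → ℝ) (u : ℝ → ℂ) (t : ℝ) : ℝ≥0∞ :=
  ((‖u t‖₊ : ℝ≥0∞)) ^ 2 * ENNReal.ofReal (r t)

/-- `u` lies in `L²` near the left endpoint `a`. -/
def L2NearLeft (T : Set ℝ) (μ : Measure ℝ) (r : ℝ → ℝ) (u : ℝ → ℂ) : Prop :=
  ∀ c ∈ tsKappa T, ∫⁻ t in {t | (∃ s ∈ T, s < t) ∧ t ≤ c} ∩ tsKappa T, sqWeight r u t ∂μ < ∞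

/-- `u` lies in `L²` near the right endpoint `b`. -/
def L2NearRight (T : Set ℝ) (μ : Measure ℝ) (r : ℝ → ℝ) (u : ℝ → ℂ) : Prop :=
  ∀ c ∈ tsKappa T, ∫⁻ t in {t | c ≤ t ∧ ∃ s ∈ T, t < s} ∩ tsKappa T, sqWeight r u t ∂μ < ∞

/-- `ℓ` is in the limit-circle case at the left endpoint. -/
def LimitCircleLeft (T : Set ℝ) (μ : Measure ℝ) (p r q : ℝ → ℝ) : Prop :=
  ∀ z : ℂ, ∀ u u1 : ℝ → ℂ, IsSLSol T μ (cR p) (cR r) (cR q) z 0 u u1 → L2NearLeft T μ r u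

/-- `ℓ` is in the limit-point case at the left endpoint. -/
def LimitPointLeft (T : Set ℝ) (μ : Measure ℝ) (p r q : ℝ → ℝ) : Prop :=
  ∀ z : ℂ, ∃ u u1 : ℝ → ℂ, IsSLSol T μ (cR p) (cR r) (cR q) z 0 u u1 ∧ ¬ L2NearLeft T μ r u

/-- `ℓ` is in the limit-circle case at the right endpoint. -/
def LimitCircleRight (T : Set ℝ) (μ : Measure ℝ) (p r q : ℝ → ℝ) : Prop :=
  ∀ z : ℂ, ∀ u u1 : ℝ → ℂ, IsSLSol T μ (cR p) (cR r) (cR q) z 0 u u1 → L2NearRight T μ r u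

/-- `ℓ` is in the limit-point case at the right endpoint. -/
def LimitPointRight (T : Set ℝ) (μ : Measure ℝ) (p r q : ℝ → ℝ) : Prop :=
  ∀ z : ℂ, ∃ u u1 : ℝ → ℂ, IsSLSol T μ (cR p) (cR r) (cR q) z 0 u u1 ∧ ¬ L2NearRight T μ r u

/-- The action `ℓ u = (-h + q u)/r` of the differential expression on a pair with density `h`. -/
noncomputable def ellApply (r q : ℝ → ℝ) (h u : ℝ → ℂ) (t : ℝ) : ℂ :=
  (-h t + (q t : ℂ) * u t) / (r t : ℂ)

/-- Membership in `L²(𝕋_κ; r dσ_κ)`. -/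
def MemL2T (T : Set ℝ) (μ : Measure ℝ) (r : ℝ → ℝ) (u : ℝ → ℂ) : Prop :=
  ∫⁻ t in tsKappa T, sqWeight r u t ∂μ < ∞

/-- The pair `(u, u^[1])` with density `h` belongs to `D_ℓ²`. -/
def MemD2 (T : Set ℝ) (μ : Measure ℝ) (p r q : ℝ → ℝ) (u u1 h : ℝ → ℂ) : Prop :=
  LocallyIntegrable h μ ∧ IsPair T μ (cR p) u u1 h ∧ MemL2T T μ r u ∧
    MemL2T T μ r (ellApply r q h u)

/-- The filter `x ↓ a`, `x ∈ 𝕋`. -/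
noncomputable def leftLimFilter (T : Set ℝ) : Filter ℝ :=
  if BddBelow T then nhdsWithin (sInf T) T else Filter.atBot ⊓ Filter.principal T

/-- The filter `x ↑ b`, `x ∈ 𝕋`. -/
noncomputable def rightLimFilter (T : Set ℝ) : Filter ℝ :=
  if BddAbove T then nhdsWithin (sSup T) T else Filter.atTop ⊓ Filter.principal T

/-- The measure `r dσ_κ` on `𝕋_κ`, giving the Hilbert space `L²(𝕋_κ; r dσ_κ)`. -/
noncomputable def wM (T : Set ℝ) (μ : Measure ℝ) (r : ℝ → ℝ) : Measure ℝ :=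
  (μ.restrict (tsKappa T)).withDensity fun t => ENNReal.ofReal (r t)

/-!
When `W = W(u_b, u_a) ≠ 0`, variation of constants shows that
`g(x) = W⁻¹ (u_b(x) ∫_{(-∞, x]} u_a f r dσ_κ + u_a(x) ∫_{(x, ∞)} u_b f r dσ_κ)`
solves `(ℓ - z) g = f`. One of the two integrals vanishes at each end, so `g` inherits the boundary
condition of `u_a` at `σ(a)` and that of `u_b` at `b`; at `σ(a)` this needs `dσ_κ {σ(a)} = 0`, which
holds because `S` is single-valued. If `W` were zero, `u_a` would satisfy both boundary conditions
and so be an eigenfunction of a symmetric operator with the non-real eigenvalue `z`. Hence `u_a = 0`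
almost everywhere, `u_a^[1]` is constant, and this constant is `0` because `1 / p̄` vanishes almost
nowhere; so `u_a` would be trivial. The absence of non-real eigenvalues also gives uniqueness.
-/

/-! ### Primitives with respect to a measure on the line -/

theorem locallyIntegrable_of_integrableOn_Ioc {E : Type*} [NormedAddCommGroup E]
    {m : Measure ℝ} {f : ℝ → E} (h : ∀ c x, c ≤ x → IntegrableOn f (Ioc c x) m) :
    LocallyIntegrable f m := fun x ↦
  ⟨Ioc (x - 1) (x + 1), Ioc_mem_nhds (by linarith) (by linarith), h _ _ (by linarith)⟩

theorem integrableOn_Ioc_of_locallyIntegrable {E : Type*} [NormedAddCommGroup E] {m : Measure ℝ}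
    {f : ℝ → E} (hf : LocallyIntegrable f m) (c x : ℝ) : IntegrableOn f (Ioc c x) m :=
  (hf.integrableOn_isCompact isCompact_Icc).mono_set Ioc_subset_Icc_self

theorem locallyIntegrable_norm {E : Type*} [NormedAddCommGroup E] {m : Measure ℝ} {f : ℝ → E}
    (hf : LocallyIntegrable f m) : LocallyIntegrable (fun t ↦ ‖f t‖) m :=
  locallyIntegrable_of_integrableOn_Ioc fun c x _ ↦
    (integrableOn_Ioc_of_locallyIntegrable hf c x).norm

section Primitive

variable {E : Type*} [NormedAddCommGroup E] [NormedSpace ℝ E]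

/-- `F` is a primitive of `f` with respect to the measure `m`, with increments taken over the
half-open intervals `(c, x]`. Local integrability is part of the notion, because the integral of a
non-integrable function is `0` by convention. -/
structure IsPrimitive (m : Measure ℝ) (F f : ℝ → E) : Prop where
  locallyIntegrable : LocallyIntegrable f m
  eq_add : ∀ c x, c ≤ x → F x = F c + ∫ t in Ioc c x, f t ∂m

variable {m : Measure ℝ} {F G f g : ℝ → E}

theorem stronglyMeasurable_setIntegral_section [SFinite m] {X : Type*} [MeasurableSpace X]
    {s : Set (X × ℝ)} (hs : MeasurableSet s) (hf : AEStronglyMeasurable f m) :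
    StronglyMeasurable fun x ↦ ∫ t in Prod.mk x ⁻¹' s, f t ∂m := by
  have h_eq (x : X) : ∫ t in Prod.mk x ⁻¹' s, f t ∂m =
      ∫ t, s.indicator (fun y ↦ hf.mk f y.2) (x, t) ∂m := by
    rw [setIntegral_congr_ae (measurable_prodMk_left hs) (hf.ae_eq_mk.mono fun _ h _ ↦ h),
      ← integral_indicator (measurable_prodMk_left hs)]
    rfl
  simp only [h_eq]
  exact StronglyMeasurable.integral_prod_right (f := fun x t ↦ s.indicator _ (x, t)) <|
    (hf.stronglyMeasurable_mk.comp_measurable measurable_snd).indicator hs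

namespace IsPrimitive

theorem integrableOn_Ioc (hF : IsPrimitive m F f) (c x : ℝ) : IntegrableOn f (Ioc c x) m :=
  integrableOn_Ioc_of_locallyIntegrable hF.locallyIntegrable c x

theorem intervalIntegrable (hF : IsPrimitive m F f) (c x : ℝ) : IntervalIntegrable f m c x :=
  ⟨hF.integrableOn_Ioc c x, hF.integrableOn_Ioc x c⟩

theorem eq_add_intervalIntegral (hF : IsPrimitive m F f) (c x : ℝ) :
    F x = F c + ∫ t in c..x, f t ∂m := by
  rcases le_total c x with h | h
  · rw [intervalIntegral.integral_of_le h, hF.eq_add c x h]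
  · rw [intervalIntegral.integral_of_ge h, hF.eq_add x c h, add_neg_cancel_right]

theorem of_eq_add_intervalIntegral (hf : LocallyIntegrable f m) (c : ℝ)
    (h : ∀ x, F x = F c + ∫ t in c..x, f t ∂m) : IsPrimitive m F f := by
  have hii (x y : ℝ) : IntervalIntegrable f m x y :=
    ⟨integrableOn_Ioc_of_locallyIntegrable hf x y, integrableOn_Ioc_of_locallyIntegrable hf y x⟩
  refine ⟨hf, fun x y hxy ↦ ?_⟩
  rw [h x, h y, ← intervalIntegral.integral_of_le hxy, add_assoc,
    intervalIntegral.integral_add_adjacent_intervals (hii _ _) (hii _ _)]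

theorem of_setIntegral_Iic (hf : Integrable f m) :
    IsPrimitive m (fun x ↦ ∫ t in Iic x, f t ∂m) f := by
  refine ⟨hf.locallyIntegrable, fun c x hcx ↦ ?_⟩
  rw [← intervalIntegral.integral_of_le hcx,
    ← intervalIntegral.integral_Iic_sub_Iic hf.integrableOn hf.integrableOn, add_sub_cancel]

theorem of_setIntegral_Ioi (hf : Integrable f m) :
    IsPrimitive m (fun x ↦ ∫ t in Ioi x, f t ∂m) (fun t ↦ -f t) := by
  refine ⟨hf.neg.locallyIntegrable, fun c x hcx ↦ ?_⟩
  rw [integral_neg, ← intervalIntegral.integral_of_le hcx,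
    ← intervalIntegral.integral_Ioi_sub_Ioi hf.integrableOn hcx]
  abel

theorem congr_density (hF : IsPrimitive m F f) (h : f = g) : IsPrimitive m F g := h ▸ hF

theorem add (hF : IsPrimitive m F f) (hG : IsPrimitive m G g) :
    IsPrimitive m (fun x ↦ F x + G x) (fun t ↦ f t + g t) := by
  refine ⟨hF.locallyIntegrable.add hG.locallyIntegrable, fun c x hcx ↦ ?_⟩
  rw [integral_add (hF.integrableOn_Ioc c x) (hG.integrableOn_Ioc c x), hF.eq_add c x hcx,
    hG.eq_add c x hcx, add_add_add_comm]

theorem const_mul {𝕜 : Type*} [RCLike 𝕜] {F f : ℝ → 𝕜} (hF : IsPrimitive m F f) (a : 𝕜) :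
    IsPrimitive m (fun x ↦ a * F x) (fun t ↦ a * f t) := by
  refine ⟨hF.locallyIntegrable.smul a, fun c x hcx ↦ ?_⟩
  rw [hF.eq_add c x hcx, integral_const_mul, mul_add]

theorem norm_sub_le (hF : IsPrimitive m F f) {φ : ℝ → ℝ} {c d : ℝ}
    (hφ : IntegrableOn φ (Ioc c d) m) (hfφ : ∀ t ∈ Ioc c d, ‖f t‖ ≤ φ t) {x y : ℝ}
    (hx : x ∈ Icc c d) (hy : y ∈ Icc c d) : ‖F x - F y‖ ≤ ∫ t in Ioc c d, φ t ∂m := by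
  wlog hxy : y ≤ x generalizing x y
  · rw [norm_sub_rev]
    exact this hy hx (le_of_not_ge hxy)
  have hsub : Ioc y x ⊆ Ioc c d := Ioc_subset_Ioc hy.1 hx.2
  have hφ_nonneg : 0 ≤ᵐ[m.restrict (Ioc c d)] φ :=
    ae_restrict_of_forall_mem measurableSet_Ioc fun t ht ↦ (norm_nonneg _).trans (hfφ t ht)
  rw [hF.eq_add y x hxy, add_sub_cancel_left]
  exact (norm_integral_le_of_norm_le (hφ.mono_set hsub) <|
    ae_restrict_of_forall_mem measurableSet_Ioc fun t ht ↦ hfφ t (hsub ht)).trans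
    (setIntegral_mono_set hφ hφ_nonneg hsub.eventuallyLE)

theorem exists_norm_le (hF : IsPrimitive m F f) (c d : ℝ) : ∃ C, ∀ x ∈ Icc c d, ‖F x‖ ≤ C := by
  refine ⟨‖F d‖ + ∫ t in Ioc c d, ‖f t‖ ∂m, fun x hx ↦ ?_⟩
  calc ‖F x‖ = ‖F d + (F x - F d)‖ := by rw [add_sub_cancel]
    _ ≤ ‖F d‖ + ‖F x - F d‖ := norm_add_le _ _
    _ ≤ _ := by
      gcongr
      exact hF.norm_sub_le (hF.integrableOn_Ioc c d).norm (fun _ _ ↦ le_rfl) hx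
        (right_mem_Icc.2 (hx.1.trans hx.2))

theorem stronglyMeasurable [SFinite m] (hF : IsPrimitive m F f) : StronglyMeasurable F := by
  have h_eq : F = fun x ↦ F 0 + ((∫ t in Ioc 0 x, f t ∂m) - ∫ t in Ioc x 0, f t ∂m) :=
    funext (hF.eq_add_intervalIntegral 0)
  have hf := hF.locallyIntegrable.aestronglyMeasurable
  have hs : MeasurableSet {y : ℝ × ℝ | 0 < y.2 ∧ y.2 ≤ y.1} :=
    (measurableSet_lt measurable_const measurable_snd).inter
      (measurableSet_le measurable_snd measurable_fst)
  have hs' : MeasurableSet {y : ℝ × ℝ | y.1 < y.2 ∧ y.2 ≤ 0} :=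
    (measurableSet_lt measurable_fst measurable_snd).inter
      (measurableSet_le measurable_snd measurable_const)
  rw [h_eq]
  exact stronglyMeasurable_const.add <| (stronglyMeasurable_setIntegral_section hs hf).sub
    (stronglyMeasurable_setIntegral_section hs' hf)

theorem continuous (hF : IsPrimitive volume F f) : Continuous F := by
  rw [funext (hF.eq_add_intervalIntegral 0)]
  exact continuous_const.add (intervalIntegral.continuous_primitive hF.intervalIntegrable 0)

theorem eq_of_ae_eq_zero (hF : IsPrimitive m F f) (hf : ∀ᵐ t ∂m, f t = 0) (c x : ℝ) :
    F x = F c := by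
  rw [hF.eq_add_intervalIntegral c x, intervalIntegral.integral_zero_ae (hf.mono fun _ h _ ↦ h),
    add_zero]

theorem ae_eq_zero_of_eqOn_const [CompleteSpace E] (hF : IsPrimitive volume F f) {c d : ℝ} {a : E}
    (h : ∀ x ∈ Icc c d, F x = a) : ∀ᵐ t, t ∈ Ioo c d → f t = 0 := by
  filter_upwards [LocallyIntegrable.ae_hasDerivAt_integral hF.locallyIntegrable] with t ht htcd
  have h_deriv : HasDerivAt F (f t) t := by
    rw [funext (hF.eq_add_intervalIntegral c)]
    exact (ht c).const_add _
  refine h_deriv.unique ((hasDerivAt_const t a).congr_of_eventuallyEq ?_)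
  filter_upwards [Icc_mem_nhds htcd.1 htcd.2] with x hx using h x hx

end IsPrimitive

end Primitive

section LocallyBounded

variable {E : Type*} [NormedAddCommGroup E] {m n : Measure ℝ}

theorem locallyIntegrable_mul_of_forall_exists_norm_le {𝕜 : Type*} [RCLike 𝕜] {w u : ℝ → 𝕜}
    (hw : LocallyIntegrable w m) (hu : StronglyMeasurable u)
    (hu_bdd : ∀ c d, ∃ C, ∀ x ∈ Icc c d, ‖u x‖ ≤ C) :
    LocallyIntegrable (fun t ↦ w t * u t) m := by
  refine locallyIntegrable_of_integrableOn_Ioc fun c d _ ↦ ?_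
  obtain ⟨C, hC⟩ := hu_bdd c d
  exact (integrableOn_Ioc_of_locallyIntegrable hw c d).mul_bdd (c := C) hu.aestronglyMeasurable <|
    ae_restrict_of_forall_mem measurableSet_Ioc fun x hx ↦ hC x (Ioc_subset_Icc_self hx)

theorem IsPrimitive.locallyIntegrable_mul {𝕜 : Type*} [RCLike 𝕜] [SFinite m] {w U f : ℝ → 𝕜}
    (hU : IsPrimitive m U f) (hw : LocallyIntegrable w n) :
    LocallyIntegrable (fun t ↦ w t * U t) n :=
  locallyIntegrable_mul_of_forall_exists_norm_le hw hU.stronglyMeasurable hU.exists_norm_le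

/- If `f` is not integrable near `x₀`, every integral over an interval around `x₀` is `0` by
convention, so that `F` is constant off `x₀`. -/
theorem stronglyMeasurable_and_exists_norm_le_of_eq_add [NormedSpace ℝ E] [SFinite m]
    {F f : ℝ → E} (h : ∀ c x, c ≤ x → F x = F c + ∫ t in Ioc c x, f t ∂m) :
    StronglyMeasurable F ∧ ∀ c d, ∃ C, ∀ x ∈ Icc c d, ‖F x‖ ≤ C := by
  by_cases hf : LocallyIntegrable f m
  · exact ⟨IsPrimitive.stronglyMeasurable ⟨hf, h⟩, IsPrimitive.exists_norm_le ⟨hf, h⟩⟩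
  obtain ⟨x₀, hx₀⟩ := not_forall.1 hf
  have h_across {c x : ℝ} (hc : c < x₀) (hx : x₀ < x) : F x = F c := by
    rw [h c x (hc.trans hx).le, integral_undef fun hi ↦ hx₀ ⟨_, Ioc_mem_nhds hc hx, hi⟩, add_zero]
  have h_const : ∀ x, x ≠ x₀ → F x = F (x₀ - 1) := by
    intro x hx
    rcases hx.lt_or_gt with hlt | hgt
    · rw [← h_across hlt (lt_add_one x₀), h_across (sub_one_lt x₀) (lt_add_one x₀)]
    · exact h_across (sub_one_lt x₀) hgt
  constructor
  · have h_eq : F = ({x₀} : Set ℝ).piecewise (fun _ ↦ F x₀) fun _ ↦ F (x₀ - 1) := by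
      funext x
      by_cases hx : x = x₀ <;> simp [Set.piecewise, hx, h_const]
    rw [h_eq]
    exact stronglyMeasurable_const.piecewise (measurableSet_singleton x₀) stronglyMeasurable_const
  · refine fun _ _ ↦ ⟨max ‖F x₀‖ ‖F (x₀ - 1)‖, fun x _ ↦ ?_⟩
    by_cases hx : x = x₀
    · simp [hx]
    · simp [h_const x hx]

end LocallyBounded

section Product

variable {𝕜 : Type*} [RCLike 𝕜] {m n : Measure ℝ} {U V f k : ℝ → 𝕜}

/-- The left limit at `x` of a primitive `V` of `k` with respect to `n`, which differs from `V x`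
by the mass that `k n` puts on the point `x`. -/
noncomputable def leftValue (n : Measure ℝ) (V k : ℝ → 𝕜) (x : ℝ) : 𝕜 := V x - n.real {x} * k x

theorem leftValue_of_nullSingletonClass [NullSingletonClass n] : leftValue n V k = V := by
  funext x
  simp [leftValue, measureReal_def]

theorem IsPrimitive.setIntegral_Icc (hV : IsPrimitive n V k) {s x : ℝ} (hsx : s ≤ x) :
    ∫ t in Icc s x, k t ∂n = V x - leftValue n V k s := by
  have hk : IntegrableOn k (Icc s x) n := hV.locallyIntegrable.integrableOn_isCompact isCompact_Icc
  have h_union : ({s} : Set ℝ) ∪ Ioc s x = Icc s x := by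
    rw [singleton_union, Ioc_insert_left hsx]
  have h_disj : Disjoint ({s} : Set ℝ) (Ioc s x) := by simp
  rw [← h_union] at hk ⊢
  rw [setIntegral_union h_disj measurableSet_Ioc hk.left_of_union hk.right_of_union,
    integral_singleton, hV.eq_add s x hsx, leftValue, RCLike.real_smul_eq_coe_mul]
  ring

theorem setIntegral_Ioc_mul_setIntegral_Ioc [SFinite m] [SFinite n] {c x : ℝ}
    (hf : IntegrableOn f (Ioc c x) m) (hk : IntegrableOn k (Ioc c x) n) :
    IntegrableOn (fun s ↦ f s * ∫ t in Icc s x, k t ∂n) (Ioc c x) m ∧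
      ∫ t in Ioc c x, k t * ∫ s in Ioc c t, f s ∂m ∂n =
        ∫ s in Ioc c x, f s * ∫ t in Icc s x, k t ∂n ∂m := by
  let J : ℝ × ℝ → 𝕜 := {y : ℝ × ℝ | y.1 ≤ y.2}.indicator fun y ↦ f y.1 * k y.2
  have hJ : Integrable J ((m.restrict (Ioc c x)).prod (n.restrict (Ioc c x))) :=
    (hf.mul_prod hk).indicator (measurableSet_le measurable_fst measurable_snd)
  have hJ_fst : ∀ t ∈ Ioc c x, ∫ s in Ioc c x, J (s, t) ∂m = k t * ∫ s in Ioc c t, f s ∂m := by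
    intro t ht
    have h_inter : Ioc c x ∩ Iic t = Ioc c t := by rw [Ioc_inter_Iic, min_eq_right ht.2]
    rw [← integral_const_mul, ← h_inter, ← setIntegral_indicator measurableSet_Iic]
    refine integral_congr_ae (Eventually.of_forall fun s ↦ ?_)
    by_cases hst : s ≤ t <;> simp [J, hst, mul_comm]
  have hJ_snd : ∀ s ∈ Ioc c x, ∫ t in Ioc c x, J (s, t) ∂n = f s * ∫ t in Icc s x, k t ∂n := by
    intro s hs
    have h_inter : Ioc c x ∩ Ici s = Icc s x := by
      ext t
      simp only [mem_inter_iff, mem_Ioc, mem_Ici, mem_Icc]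
      exact ⟨fun h ↦ ⟨h.2, h.1.2⟩, fun h ↦ ⟨⟨hs.1.trans_le h.1, h.2⟩, h.1⟩⟩
    rw [← integral_const_mul, ← h_inter, ← setIntegral_indicator measurableSet_Ici]
    refine integral_congr_ae (Eventually.of_forall fun t ↦ ?_)
    by_cases hst : s ≤ t <;> simp [J, hst]
  constructor
  · exact hJ.integral_prod_left.congr (ae_restrict_of_forall_mem measurableSet_Ioc hJ_snd)
  · rw [← setIntegral_congr_fun measurableSet_Ioc hJ_fst,
      ← setIntegral_congr_fun measurableSet_Ioc hJ_snd]
    exact (integral_integral_swap (f := fun s t ↦ J (s, t)) hJ).symm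

namespace IsPrimitive

variable [SFinite m] [SFinite n]

theorem locallyIntegrable_mul_leftValue (hU : IsPrimitive m U f) (hV : IsPrimitive n V k) :
    LocallyIntegrable (fun t ↦ f t * leftValue n V k t) m := by
  refine locallyIntegrable_of_integrableOn_Ioc fun c x _ ↦ ?_
  have h := (setIntegral_Ioc_mul_setIntegral_Ioc (hU.integrableOn_Ioc c x)
    (hV.integrableOn_Ioc c x)).1
  refine (((hU.integrableOn_Ioc c x).mul_const (V x)).sub h).congr
    (ae_restrict_of_forall_mem measurableSet_Ioc fun s hs ↦ ?_)
  simp only [Pi.sub_apply, hV.setIntegral_Icc hs.2]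
  ring

theorem mul_eq_add (hU : IsPrimitive m U f) (hV : IsPrimitive n V k) {c x : ℝ} (hcx : c ≤ x) :
    U x * V x = U c * V c + ∫ t in Ioc c x, k t * U t ∂n +
      ∫ t in Ioc c x, f t * leftValue n V k t ∂m := by
  have hf := hU.integrableOn_Ioc c x
  have hk := hV.integrableOn_Ioc c x
  have h_left := integrableOn_Ioc_of_locallyIntegrable (hU.locallyIntegrable_mul_leftValue hV) c x
  have hkU := integrableOn_Ioc_of_locallyIntegrable
    (hU.locallyIntegrable_mul hV.locallyIntegrable) c x
  have h_inner : ∫ t in Ioc c x, k t * ∫ s in Ioc c t, f s ∂m ∂n =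
      (∫ t in Ioc c x, k t * U t ∂n) - (∫ t in Ioc c x, k t ∂n) * U c := by
    rw [← integral_mul_const, ← integral_sub hkU (hk.mul_const _)]
    refine setIntegral_congr_fun measurableSet_Ioc fun t ht ↦ ?_
    simp only [hU.eq_add c t ht.1.le]
    ring
  have h_outer : ∫ s in Ioc c x, f s * ∫ t in Icc s x, k t ∂n ∂m =
      (∫ t in Ioc c x, f t ∂m) * V x - ∫ t in Ioc c x, f t * leftValue n V k t ∂m := by
    rw [← integral_mul_const, ← integral_sub (hf.mul_const _) h_left]
    refine setIntegral_congr_fun measurableSet_Ioc fun s hs ↦ ?_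
    simp only [hV.setIntegral_Icc hs.2]
    ring
  have h_swap := (setIntegral_Ioc_mul_setIntegral_Ioc hf hk).2
  rw [h_inner, h_outer] at h_swap
  linear_combination V x * hU.eq_add c x hcx + U c * hV.eq_add c x hcx - h_swap

theorem mul (hU : IsPrimitive m U f) (hV : IsPrimitive m V k) :
    IsPrimitive m (fun x ↦ U x * V x) (fun t ↦ k t * U t + f t * leftValue m V k t) := by
  have hkU := hU.locallyIntegrable_mul hV.locallyIntegrable
  have h_left := hU.locallyIntegrable_mul_leftValue hV
  refine ⟨hkU.add h_left, fun c x hcx ↦ ?_⟩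
  rw [hU.mul_eq_add hV hcx, add_assoc, integral_add (integrableOn_Ioc_of_locallyIntegrable hkU c x)
    (integrableOn_Ioc_of_locallyIntegrable h_left c x)]

theorem mul_add_mul {A B u v f g Φ : ℝ → 𝕜} (hu : IsPrimitive volume u f)
    (hv : IsPrimitive volume v g) (hA : IsPrimitive m A (fun t ↦ Φ t * v t))
    (hB : IsPrimitive m B (fun t ↦ -(Φ t * u t))) :
    IsPrimitive volume (fun x ↦ u x * A x + v x * B x) (fun t ↦ f t * A t + g t * B t) := by
  have hfA := hA.locallyIntegrable_mul hu.locallyIntegrable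
  have hgB := hB.locallyIntegrable_mul hv.locallyIntegrable
  refine ⟨hfA.add hgB, fun c x hcx ↦ ?_⟩
  have hAu := hA.mul_eq_add hu hcx
  have hBv := hB.mul_eq_add hv hcx
  have h_cancel : ∫ t in Ioc c x, -(Φ t * u t) * v t ∂m = -∫ t in Ioc c x, Φ t * v t * u t ∂m := by
    rw [← integral_neg]
    exact integral_congr_ae (Eventually.of_forall fun t ↦ by ring)
  rw [leftValue_of_nullSingletonClass] at hAu hBv
  rw [integral_add (integrableOn_Ioc_of_locallyIntegrable hfA c x)
    (integrableOn_Ioc_of_locallyIntegrable hgB c x)]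
  linear_combination hAu + hBv + h_cancel

end IsPrimitive

end Product

/-! ### Quasi-differential pairs -/

/-- `(u, u1)` solves the first-order system `du = k u1 dx`, `du1 = h dμ`: the measure-valued form of
a Sturm–Liouville expression, with `k = 1 / p` and `u1` the quasi-derivative of `u`. -/
structure IsQuasiPair (μ : Measure ℝ) (k u u1 h : ℝ → ℂ) : Prop where
  fst : IsPrimitive volume u (fun t ↦ k t * u1 t)
  snd : IsPrimitive μ u1 h

theorem exists_setIntegral_norm_mul_lt_one {μ : Measure ℝ} {k w : ℝ → ℂ}
    (hk : LocallyIntegrable k) (hw : LocallyIntegrable w μ) (y : ℝ) :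
    ∃ ε > 0, (∫ t in Ioc (y - ε) (y + ε), ‖k t‖) * ∫ t in Ioc (y - ε) (y + ε), ‖w t‖ ∂μ < 1 := by
  have hP : IsPrimitive volume (fun x ↦ ∫ t in 0..x, ‖k t‖) fun t ↦ ‖k t‖ :=
    .of_eq_add_intervalIntegral (locallyIntegrable_norm hk) 0 fun x ↦ by simp
  have h_lim : Tendsto (fun ε ↦ ((∫ t in 0..y + ε, ‖k t‖) - ∫ t in 0..y - ε, ‖k t‖) *
      ∫ t in Ioc (y - 1) (y + 1), ‖w t‖ ∂μ) (nhds 0) (nhds 0) := by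
    have h_cont := ((hP.continuous.comp (continuous_const_add y)).sub
      (hP.continuous.comp (continuous_sub_left y))).mul_const
      (∫ t in Ioc (y - 1) (y + 1), ‖w t‖ ∂μ)
    simpa using h_cont.tendsto 0
  obtain ⟨ε, hε_small, hε_pos, hε_one⟩ := ((h_lim.mono_left nhdsWithin_le_nhds).eventually_lt_const
    one_pos |>.and (Ioc_mem_nhdsGT one_pos)).exists
  have hw_int : IntegrableOn (fun t ↦ ‖w t‖) (Ioc (y - 1) (y + 1)) μ :=
    integrableOn_Ioc_of_locallyIntegrable (locallyIntegrable_norm hw) _ _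
  refine ⟨ε, hε_pos, lt_of_le_of_lt ?_ hε_small⟩
  have hk_eq := hP.eq_add (y - ε) (y + ε) (by linarith)
  rw [← sub_eq_iff_eq_add'] at hk_eq
  rw [hk_eq]
  refine mul_le_mul_of_nonneg_left ?_ (integral_nonneg fun _ ↦ norm_nonneg _)
  exact setIntegral_mono_set hw_int (Eventually.of_forall fun _ ↦ norm_nonneg _)
    (Ioc_subset_Ioc (by linarith) (by linarith)).eventuallyLE

namespace IsQuasiPair

variable {μ : Measure ℝ} {k w u u1 v v1 h j : ℝ → ℂ}

theorem add (hu : IsQuasiPair μ k u u1 h) (hv : IsQuasiPair μ k v v1 j) :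
    IsQuasiPair μ k (fun x ↦ u x + v x) (fun x ↦ u1 x + v1 x) (fun t ↦ h t + j t) :=
  ⟨(hu.fst.add hv.fst).congr_density (funext fun _ ↦ (mul_add _ _ _).symm), hu.snd.add hv.snd⟩

theorem const_mul (hu : IsQuasiPair μ k u u1 h) (a : ℂ) :
    IsQuasiPair μ k (fun x ↦ a * u x) (fun x ↦ a * u1 x) (fun t ↦ a * h t) :=
  ⟨(hu.fst.const_mul a).congr_density (funext fun _ ↦ mul_left_comm _ _ _), hu.snd.const_mul a⟩

theorem congr_density (hu : IsQuasiPair μ k u u1 h) (hhj : h = j) : IsQuasiPair μ k u u1 j :=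
  hhj ▸ hu

theorem of_eq_add [SFinite μ] (hk : LocallyIntegrable k) (hw : LocallyIntegrable w μ)
    (hu : ∀ c x, c ≤ x → u x = u c + ∫ t in Ioc c x, k t * u1 t)
    (hu1 : ∀ c x, c ≤ x → u1 x = u1 c + ∫ t in Ioc c x, w t * u t ∂μ) :
    IsQuasiPair μ k u u1 (fun t ↦ w t * u t) := by
  obtain ⟨hu_meas, hu_bdd⟩ := stronglyMeasurable_and_exists_norm_le_of_eq_add hu
  have h_snd : IsPrimitive μ u1 (fun t ↦ w t * u t) :=
    ⟨locallyIntegrable_mul_of_forall_exists_norm_le hw hu_meas hu_bdd, hu1⟩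
  exact ⟨⟨h_snd.locallyIntegrable_mul hk, hu⟩, h_snd⟩

theorem wronskian_eq [SFinite μ] (hu : IsQuasiPair μ k u u1 (fun t ↦ w t * u t))
    (hv : IsQuasiPair μ k v v1 (fun t ↦ w t * v t)) (x y : ℝ) :
    Wr u u1 v v1 x = Wr u u1 v v1 y := by
  wlog hyx : y ≤ x generalizing x y
  · exact (this y x (le_of_not_ge hyx)).symm
  have huv1 := hv.snd.mul_eq_add hu.fst hyx
  have hu1v := hu.snd.mul_eq_add hv.fst hyx
  simp only [leftValue_of_nullSingletonClass, mul_right_comm _ _ (v1 _), mul_right_comm _ (v _)]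
    at huv1 hu1v
  simp only [Wr]
  linear_combination huv1 - hu1v

theorem eqOn_zero_of_contraction {c d : ℝ} (hu : IsQuasiPair μ k u u1 (fun t ↦ w t * u t))
    (hk : LocallyIntegrable k) (hw : LocallyIntegrable w μ)
    (h_lt : (∫ t in Ioc c d, ‖k t‖) * ∫ t in Ioc c d, ‖w t‖ ∂μ < 1) {y : ℝ} (hy : y ∈ Icc c d)
    (huy : u y = 0) (hu1y : u1 y = 0) {x : ℝ} (hx : x ∈ Icc c d) : u x = 0 ∧ u1 x = 0 := by
  obtain ⟨s, hs, h_max⟩ := isCompact_Icc.exists_isMaxOn ⟨y, hy⟩ hu.fst.continuous.norm.continuousOn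
  have hk_int := integrableOn_Ioc_of_locallyIntegrable (locallyIntegrable_norm hk) c d
  have hw_int := integrableOn_Ioc_of_locallyIntegrable (locallyIntegrable_norm hw) c d
  have h_snd : ∀ t ∈ Icc c d, ‖u1 t‖ ≤ (∫ t in Ioc c d, ‖w t‖ ∂μ) * ‖u s‖ := by
    intro t ht
    rw [← integral_mul_const, ← sub_zero (u1 t), ← hu1y]
    refine hu.snd.norm_sub_le (hw_int.mul_const _) (fun t ht ↦ ?_) ht hy
    rw [norm_mul]
    gcongr
    exact h_max (Ioc_subset_Icc_self ht)
  have h_fst : ‖u s‖ ≤ (∫ t in Ioc c d, ‖k t‖) * ((∫ t in Ioc c d, ‖w t‖ ∂μ) * ‖u s‖) := by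
    rw [← integral_mul_const]
    nth_rewrite 1 [← sub_zero (u s), ← huy]
    refine hu.fst.norm_sub_le (hk_int.mul_const _) (fun t ht ↦ ?_) hs hy
    rw [norm_mul]
    gcongr
    exact h_snd t (Ioc_subset_Icc_self ht)
  have hus : ‖u s‖ = 0 := by
    by_contra h_ne
    nlinarith [(norm_nonneg (u s)).lt_of_ne' h_ne]
  have hu1x := h_snd x hx
  rw [hus, mul_zero] at hu1x
  exact ⟨norm_le_zero_iff.1 ((h_max hx).trans_eq hus), norm_le_zero_iff.1 hu1x⟩

theorem eq_zero (hu : IsQuasiPair μ k u u1 (fun t ↦ w t * u t)) (hk : LocallyIntegrable k)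
    (hw : LocallyIntegrable w μ) {y : ℝ} (huy : u y = 0) (hu1y : u1 y = 0) (x : ℝ) :
    u x = 0 ∧ u1 x = 0 := by
  let P : ℝ → ℝ → Prop := fun x y ↦ (u x = 0 ∧ u1 x = 0) ↔ (u y = 0 ∧ u1 y = 0)
  have h_symm : Std.Symm P := ⟨fun _ _ ↦ Iff.symm⟩
  have h_trans : IsTrans ℝ P := ⟨fun _ _ _ ↦ Iff.trans⟩
  refine (PreconnectedSpace.induction₂ P (fun x ↦ ?_) h_trans y x).1 ⟨huy, hu1y⟩
  obtain ⟨ε, hε, h_lt⟩ := exists_setIntegral_norm_mul_lt_one hk hw x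
  have hx : x ∈ Icc (x - ε) (x + ε) := ⟨by linarith, by linarith⟩
  filter_upwards [Icc_mem_nhds (sub_lt_self x hε) (lt_add_of_pos_right x hε)] with t ht
  exact ⟨fun h0 ↦ hu.eqOn_zero_of_contraction hk hw h_lt hx h0.1 h0.2 ht,
    fun h0 ↦ hu.eqOn_zero_of_contraction hk hw h_lt ht h0.1 h0.2 hx⟩

/- The jumps of `A` and `v1` (and of `B` and `u1`) at an atom of `μ` interact, but only through the
left limits of `u1` and `v1`, whose Wronskian with `(u, v)` has no jump. -/
theorem variation_of_constants [SFinite μ] {A B Φ : ℝ → ℂ}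
    (hu : IsQuasiPair μ k u u1 (fun t ↦ w t * u t)) (hv : IsQuasiPair μ k v v1 (fun t ↦ w t * v t))
    (hA : IsPrimitive μ A (fun t ↦ Φ t * v t)) (hB : IsPrimitive μ B (fun t ↦ -(Φ t * u t))) :
    IsQuasiPair μ k (fun x ↦ u x * A x + v x * B x) (fun x ↦ u1 x * A x + v1 x * B x)
      (fun t ↦ w t * (u t * A t + v t * B t) - Wr u u1 v v1 t * Φ t) := by
  have h_snd := (hA.mul hu.snd).add (hB.mul hv.snd)
  simp only [mul_comm (A _) (u1 _), mul_comm (B _) (v1 _)] at h_snd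
  refine ⟨(hu.fst.mul_add_mul hv.fst hA hB).congr_density (funext fun t ↦ ?_),
    h_snd.congr_density (funext fun t ↦ ?_)⟩
  · ring
  · simp only [leftValue, Wr]
    ring

theorem exists_eqOn_zero_Ici [SFinite μ] {α : ℝ} (hk : LocallyIntegrable k) (hh : Integrable h μ)
    (hh_zero : ∀ t, α < t → h t = 0) :
    ∃ u u1, IsQuasiPair μ k u u1 (fun t ↦ -h t) ∧ ∀ x, α ≤ x → u x = 0 ∧ u1 x = 0 := by
  set u1 : ℝ → ℂ := fun x ↦ ∫ t in Ioi x, h t ∂μ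
  have hu1 : IsPrimitive μ u1 (fun t ↦ -h t) := .of_setIntegral_Ioi hh
  have hu1_zero : ∀ x, α ≤ x → u1 x = 0 := fun x hx ↦
    setIntegral_eq_zero_of_forall_eq_zero fun t ht ↦ hh_zero t (hx.trans_lt ht)
  refine ⟨fun x ↦ ∫ t in α..x, k t * u1 t, u1, ⟨?_, hu1⟩, fun x hx ↦ ⟨?_, hu1_zero x hx⟩⟩
  · exact .of_eq_add_intervalIntegral (hu1.locallyIntegrable_mul hk) α fun x ↦ by simp
  · beta_reduce
    rw [intervalIntegral.integral_of_le hx]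
    exact setIntegral_eq_zero_of_forall_eq_zero fun t ht ↦ by rw [hu1_zero t ht.1.le, mul_zero]

end IsQuasiPair

/-! ### Compact time scales -/

section TimeScale

variable {K T : Set ℝ} {s t d : ℝ}

theorem tsSigma_le (hs : s ∈ K) (hts : t < s) : tsSigma K t ≤ s := by
  rw [tsSigma, if_pos ⟨s, hs, hts⟩]
  exact csInf_le ⟨t, fun _ hx ↦ hx.2.le⟩ ⟨hs, hts⟩

theorem tsSigma_of_sSup_le (hK : BddAbove K) (ht : sSup K ≤ t) : tsSigma K t = sSup K :=
  if_neg fun ⟨_, hs, hts⟩ ↦ (hts.trans_le (le_csSup hK hs)).not_ge ht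

theorem tsSigma_mem (hK : IsCompact K) (hne : K.Nonempty) (t : ℝ) : tsSigma K t ∈ K := by
  rw [tsSigma]
  split_ifs with h
  · exact hK.isClosed.closure_subset <| closure_mono (fun _ hs ↦ hs.1) <|
      csInf_mem_closure h ⟨t, fun _ hs ↦ hs.2.le⟩
  · exact hK.sSup_mem hne

theorem le_tsSigma (ht : t ≤ sSup K) : t ≤ tsSigma K t := by
  rw [tsSigma]
  split_ifs with h
  · exact le_csInf h fun _ hs ↦ hs.2.le
  · exact ht

theorem le_tsRho (hs : s ∈ K) (hsd : s < d) : s ≤ tsRho K d := by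
  rw [tsRho, if_pos ⟨s, hs, hsd⟩]
  exact le_csSup ⟨d, fun _ hx ↦ hx.2.le⟩ ⟨hs, hsd⟩

theorem tsRho_mem (hK : IsCompact K) (hne : K.Nonempty) (d : ℝ) : tsRho K d ∈ K := by
  rw [tsRho]
  split_ifs with h
  · exact hK.isClosed.closure_subset <| closure_mono (fun _ hs ↦ hs.1) <|
      csSup_mem_closure h ⟨d, fun _ hs ↦ hs.2.le⟩
  · exact hK.sInf_mem hne

theorem exists_mem_Ioo_of_lt_tsRho (ht : sInf K ≤ t) (htd : t < tsRho K d) :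
    ∃ s ∈ K, s ∈ Ioo t d := by
  rw [tsRho] at htd
  split_ifs at htd with h
  · obtain ⟨s, hs, hts⟩ := exists_lt_of_lt_csSup h htd
    exact ⟨s, hs.1, hts, hs.2⟩
  · exact absurd htd ht.not_gt

/-- The least point of `K` that is at least `t`; beyond the maximum of `K`, that maximum. The
extension of a function on `K` to `ℝ` is its composition with `tsCeil K`. -/
noncomputable def tsCeil (K : Set ℝ) (t : ℝ) : ℝ := if t ∈ K then t else tsSigma K t

theorem extK_eq_comp_tsCeil (p : ℝ → ℂ) : extK T p t = p (tsCeil (tsKappa T) t) := by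
  rw [extK, tsCeil, apply_ite p]

theorem tsCeil_mem (hK : IsCompact K) (hne : K.Nonempty) (t : ℝ) : tsCeil K t ∈ K := by
  rw [tsCeil]
  split_ifs with h
  exacts [h, tsSigma_mem hK hne t]

theorem le_tsCeil (ht : t ≤ sSup K) : t ≤ tsCeil K t := by
  rw [tsCeil]
  split_ifs with h
  exacts [le_rfl, le_tsSigma ht]

theorem tsCeil_le (hs : s ∈ K) (hts : t ≤ s) : tsCeil K t ≤ s := by
  rw [tsCeil]
  split_ifs with h
  exacts [hts, tsSigma_le hs (hts.lt_of_ne fun hts_eq ↦ h (hts_eq ▸ hs))]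

theorem tsCeil_of_le_sInf (hK : IsCompact K) (hne : K.Nonempty) (ht : t ≤ sInf K) :
    tsCeil K t = sInf K :=
  le_antisymm (tsCeil_le (hK.sInf_mem hne) ht) (csInf_le hK.bddBelow (tsCeil_mem hK hne t))

theorem tsCeil_of_sSup_lt (hK : BddAbove K) (ht : sSup K < t) : tsCeil K t = sSup K := by
  rw [tsCeil, if_neg fun h ↦ (le_csSup hK h).not_gt ht, tsSigma_of_sSup_le hK ht.le]

theorem monotoneOn_tsCeil (hK : IsCompact K) (hne : K.Nonempty) :
    MonotoneOn (tsCeil K) (Iic (sSup K)) := fun _ _ y hy hxy ↦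
  tsCeil_le (tsCeil_mem hK hne y) (hxy.trans (le_tsCeil hy))

theorem exists_gap (hK : IsCompact K) (hne : K.Nonempty) (ht : t ∉ K)
    (htK : t ∈ Icc (sInf K) (sSup K)) :
    ∃ s ∈ K, s < t ∧ ∀ y ∈ Ioc s (tsCeil K t), tsCeil K y = tsCeil K t := by
  have h_closed : IsCompact (K ∩ Iic t) := hK.inter_right isClosed_Iic
  have hs := h_closed.sSup_mem ⟨sInf K, hK.sInf_mem hne, htK.1⟩
  refine ⟨_, hs.1, lt_of_le_of_ne hs.2 fun h ↦ ht (h ▸ hs.1), fun y hy ↦ ?_⟩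
  have hy_le : y ≤ sSup K := hy.2.trans (le_csSup hK.bddAbove (tsCeil_mem hK hne t))
  refine le_antisymm (tsCeil_le (tsCeil_mem hK hne t) hy.2) (tsCeil_le (tsCeil_mem hK hne y) ?_)
  by_contra! h_lt
  exact ((hy.1.trans_le (le_tsCeil hy_le)).not_ge
    (le_csSup h_closed.bddAbove ⟨tsCeil_mem hK hne y, h_lt.le⟩))

theorem tsKappa_eq_inter_Ici (hT : IsCompact T) : tsKappa T = T ∩ Ici (tsSigma T (sInf T)) := by
  have h_inf : ∀ s ∈ T, sInf T ≤ s := fun _ hs ↦ csInf_le hT.bddBelow hs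
  rw [tsKappa]
  split_ifs with h
  · ext s
    simp only [Set.mem_sdiff, mem_singleton_iff, mem_inter_iff, mem_Ici]
    exact and_congr_right fun hs ↦
      ⟨fun h_ne ↦ tsSigma_le hs ((h_inf s hs).lt_of_ne' h_ne), fun h_le ↦ (h.2.trans_le h_le).ne'⟩
  · have h_le : tsSigma T (sInf T) ≤ sInf T := not_lt.1 fun h_lt ↦ h ⟨hT.bddBelow, h_lt⟩
    exact (inter_eq_left.2 fun s hs ↦ h_le.trans (h_inf s hs)).symm

theorem isCompact_tsKappa (hT : IsCompact T) : IsCompact (tsKappa T) :=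
  tsKappa_eq_inter_Ici hT ▸ hT.inter_right isClosed_Ici

theorem tsSigma_sInf_mem_tsKappa (hT : IsCompact T) (hne : T.Nonempty) :
    tsSigma T (sInf T) ∈ tsKappa T :=
  tsKappa_eq_inter_Ici hT ▸ ⟨tsSigma_mem hT hne _, self_mem_Ici⟩

theorem nonempty_tsKappa (hT : IsCompact T) (hne : T.Nonempty) : (tsKappa T).Nonempty :=
  ⟨_, tsSigma_sInf_mem_tsKappa hT hne⟩

theorem mem_tsKappa_of_sInf_lt (hT : IsCompact T) (hs : s ∈ T) (h_lt : sInf T < s) :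
    s ∈ tsKappa T :=
  tsKappa_eq_inter_Ici hT ▸ ⟨hs, tsSigma_le hs h_lt⟩

theorem tsKappa_subset (hT : IsCompact T) : tsKappa T ⊆ T :=
  tsKappa_eq_inter_Ici hT ▸ inter_subset_left

theorem sInf_tsKappa (hT : IsCompact T) (hne : T.Nonempty) :
    sInf (tsKappa T) = tsSigma T (sInf T) := by
  refine IsLeast.csInf_eq ⟨tsSigma_sInf_mem_tsKappa hT hne, fun s hs ↦ ?_⟩
  rw [tsKappa_eq_inter_Ici hT] at hs
  exact hs.2

theorem sSup_tsKappa (hT : IsCompact T) (hne : T.Nonempty) : sSup (tsKappa T) = sSup T := by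
  have h_le : tsSigma T (sInf T) ≤ sSup T := le_csSup hT.bddAbove (tsSigma_mem hT hne _)
  refine IsGreatest.csSup_eq ⟨?_, fun s hs ↦ le_csSup hT.bddAbove (tsKappa_subset hT hs)⟩
  exact tsKappa_eq_inter_Ici hT ▸ ⟨hT.sSup_mem hne, h_le⟩

theorem tsCeil_tsKappa (hT : IsCompact T) (hne : T.Nonempty) (ht : t ∈ Ioc (sInf T) (sSup T)) :
    tsCeil (tsKappa T) t = tsCeil T t := by
  have hK := isCompact_tsKappa hT
  have hKne := nonempty_tsKappa hT hne
  have h_le := le_tsCeil ht.2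
  refine le_antisymm (tsCeil_le ?_ h_le) (tsCeil_le (tsKappa_subset hT (tsCeil_mem hK hKne t))
    (le_tsCeil (ht.2.trans_eq (sSup_tsKappa hT hne).symm)))
  exact mem_tsKappa_of_sInf_lt hT (tsCeil_mem hT hne t) (ht.1.trans_le h_le)

theorem exists_mem_tsKappa_mem_Ioo (hT : IsCompact T)
    (h_card : ∃ s : Finset ℝ, ↑s ⊆ T ∧ 4 ≤ s.card) :
    ∃ x ∈ tsKappa T, x ∈ Ioo (sInf (tsKappa T)) (sSup (tsKappa T)) := by
  obtain ⟨s, hsT, hs_card⟩ := h_card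
  have h_three : ({sInf T, tsSigma T (sInf T), sSup T} : Finset ℝ).card < s.card :=
    Finset.card_le_three.trans_lt hs_card
  obtain ⟨x, hxs, hx⟩ := Finset.exists_mem_notMem_of_card_lt_card h_three
  simp only [Finset.mem_insert, Finset.mem_singleton, not_or] at hx
  have hxT : x ∈ T := hsT hxs
  have hne : T.Nonempty := ⟨x, hxT⟩
  have hx_inf : sInf T < x := (csInf_le hT.bddBelow hxT).lt_of_ne' hx.1
  rw [sInf_tsKappa hT hne, sSup_tsKappa hT hne]
  exact ⟨x, mem_tsKappa_of_sInf_lt hT hxT hx_inf, (tsSigma_le hxT hx_inf).lt_of_ne' hx.2.1,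
    (le_csSup hT.bddAbove hxT).lt_of_ne hx.2.2⟩

/-- `μ` is the Lebesgue–Stieltjes measure `dσ` of the forward shift of `K`. -/
def IsForwardShiftMeasure (K : Set ℝ) (μ : Measure ℝ) : Prop :=
  ∀ c d : ℝ, c ≤ d → μ (Ioc c d) = ENNReal.ofReal (tsSigma K d - tsSigma K c)

/-- `ν` is the Lebesgue–Stieltjes measure `dρ` of the backward shift of `K`; since `ρ` is
left-continuous, its increments are the masses of the intervals `[c, d)`. -/
def IsBackwardShiftMeasure (K : Set ℝ) (ν : Measure ℝ) : Prop :=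
  ∀ c d : ℝ, c ≤ d → ν (Ico c d) = ENNReal.ofReal (tsRho K d - tsRho K c)

namespace IsForwardShiftMeasure

variable {μ : Measure ℝ}

theorem measure_compl_eq_zero (hμ : IsForwardShiftMeasure K μ) (hK : IsClosed K) : μ Kᶜ = 0 := by
  refine measure_null_of_locally_null _ fun x hx ↦ ?_
  obtain ⟨ε, hε, h_ball⟩ := Metric.isOpen_iff.1 hK.isOpen_compl x hx
  refine ⟨Ioc (x - ε / 2) (x + ε / 2),
    mem_nhdsWithin_of_mem_nhds (Ioc_mem_nhds (by linarith) (by linarith)), ?_⟩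
  have h_after : {s | s ∈ K ∧ x + ε / 2 < s} = {s | s ∈ K ∧ x - ε / 2 < s} := by
    refine Set.ext fun s ↦ and_congr_right fun hs ↦ ⟨fun h ↦ by linarith, fun h ↦ ?_⟩
    by_contra! h_le
    refine h_ball ?_ hs
    rw [Real.ball_eq_Ioo]
    constructor <;> linarith
  rw [hμ _ _ (by linarith)]
  simp only [tsSigma, h_after, sub_self, ENNReal.ofReal_zero]

theorem restrict_eq_self (hμ : IsForwardShiftMeasure K μ) (hK : IsClosed K) : μ.restrict K = μ :=
  Measure.restrict_eq_self_of_ae_mem (mem_ae_iff.2 (hμ.measure_compl_eq_zero hK))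

theorem isFiniteMeasure (hμ : IsForwardShiftMeasure K μ) (hK : IsCompact K) :
    IsFiniteMeasure μ := by
  have h_subset : K ⊆ Ioc (sInf K - 1) (sSup K) := fun s hs ↦
    ⟨(sub_one_lt _).trans_le (csInf_le hK.bddBelow hs), le_csSup hK.bddAbove hs⟩
  refine ⟨?_⟩
  rw [← hμ.restrict_eq_self hK.isClosed, Measure.restrict_apply_univ]
  refine (measure_mono h_subset).trans_lt ?_
  rcases le_total (sInf K - 1) (sSup K) with h | h
  · simp [hμ _ _ h]
  · simp [Ioc_eq_empty_of_le h]

theorem eq_zero_of_ae_eq_zero {E : Type*} [NormedAddCommGroup E] (hμ : IsForwardShiftMeasure K μ)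
    (hK : IsCompact K) {u : ℝ → E} (hu : Continuous u) (hu_ae : ∀ᵐ t ∂μ, u t = 0)
    (ht : t ∈ K) (ht_lt : t < sSup K) : u t = 0 := by
  by_contra h_ne
  obtain ⟨ε, hε, h_ball⟩ := Metric.isOpen_iff.1 (isOpen_ne_fun hu continuous_const) t h_ne
  have h_null : μ (Ioc (t - ε / 2) (t + ε / 2)) = 0 := by
    refine measure_mono_null (fun x hx ↦ h_ball ?_) (ae_iff.1 hu_ae)
    rw [Real.ball_eq_Ioo]
    constructor <;> linarith [hx.1, hx.2]
  rw [hμ _ _ (by linarith), ENNReal.ofReal_eq_zero] at h_null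
  have h_left : tsSigma K (t - ε / 2) ≤ t := tsSigma_le ht (by linarith)
  have h_right : t < tsSigma K (t + ε / 2) := by
    rcases le_total (t + ε / 2) (sSup K) with h | h
    · linarith [le_tsSigma h]
    · rwa [tsSigma_of_sSup_le hK.bddAbove h]
  linarith

end IsForwardShiftMeasure

/- `tsCeil T` takes its value in `[c, d)` on the interval from `ρ(c)` to `ρ(d)`, up to the
endpoints. -/
theorem IsBackwardShiftMeasure.map_tsCeil {ν : Measure ℝ} (hν : IsBackwardShiftMeasure T ν)
    (hT : IsCompact T) (hne : T.Nonempty) :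
    AEMeasurable (tsCeil T) (volume.restrict (Ioc (sInf T) (sSup T))) ∧
      (volume.restrict (Ioc (sInf T) (sSup T))).map (tsCeil T) = ν := by
  have h_meas : AEMeasurable (tsCeil T) (volume.restrict (Ioc (sInf T) (sSup T))) :=
    aemeasurable_restrict_of_monotoneOn measurableSet_Ioc
      ((monotoneOn_tsCeil hT hne).mono Ioc_subset_Iic_self)
  refine ⟨h_meas, ?_⟩
  have h_lower (c d : ℝ) :
      Ioo (tsRho T c) (tsRho T d) ⊆ tsCeil T ⁻¹' Ico c d ∩ Ioc (sInf T) (sSup T) := by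
    intro t ht
    have h_inf : sInf T < t := (csInf_le hT.bddBelow (tsRho_mem hT hne c)).trans_lt ht.1
    have h_sup : t ≤ sSup T := ht.2.le.trans (le_csSup hT.bddAbove (tsRho_mem hT hne d))
    obtain ⟨s, hs, hts, hsd⟩ := exists_mem_Ioo_of_lt_tsRho h_inf.le ht.2
    refine ⟨⟨not_lt.1 fun h_lt ↦ ?_, (tsCeil_le hs hts.le).trans_lt hsd⟩, h_inf, h_sup⟩
    exact ht.1.not_ge ((le_tsCeil h_sup).trans (le_tsRho (tsCeil_mem hT hne t) h_lt))
  have h_upper (c d : ℝ) :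
      tsCeil T ⁻¹' Ico c d ∩ Ioc (sInf T) (sSup T) ⊆ Icc (tsRho T c) (tsRho T d) := by
    rintro t ⟨⟨hct, htd⟩, h_inf, h_sup⟩
    refine ⟨not_lt.1 fun h_lt ↦ ?_,
      (le_tsCeil h_sup).trans (le_tsRho (tsCeil_mem hT hne t) htd)⟩
    obtain ⟨s, hs, hts, hsc⟩ := exists_mem_Ioo_of_lt_tsRho h_inf.le h_lt
    exact hct.not_gt ((tsCeil_le hs hts.le).trans_lt hsc)
  have h_Ico : ∀ c d, c < d →
      (volume.restrict (Ioc (sInf T) (sSup T))).map (tsCeil T) (Ico c d) = ν (Ico c d) := by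
    intro c d hcd
    rw [Measure.map_apply_of_aemeasurable h_meas measurableSet_Ico,
      Measure.restrict_apply' measurableSet_Ioc, hν c d hcd.le]
    exact le_antisymm ((measure_mono (h_upper c d)).trans_eq Real.volume_Icc)
      (Real.volume_Ioo.symm.trans_le (measure_mono (h_lower c d)))
  refine Measure.ext_of_Ico' _ _ (fun c d hcd ↦ ?_) fun c d hcd ↦ h_Ico c d hcd
  rw [h_Ico c d hcd, hν c d hcd.le]
  exact ENNReal.ofReal_ne_top

/-- The extension `1 / p̄` to the real line of the reciprocal of a coefficient on `𝕋_κ`. -/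
noncomputable def recipExt (T : Set ℝ) (p : ℝ → ℝ) (t : ℝ) : ℂ := (extK T (cR p) t)⁻¹

section RecipExt

variable {ν : Measure ℝ} {p : ℝ → ℝ}

theorem recipExt_eq : recipExt T p t = ((1 / p (tsCeil (tsKappa T) t) : ℝ) : ℂ) := by
  rw [recipExt, extK_eq_comp_tsCeil, cR, one_div, Complex.ofReal_inv]

theorem integrableOn_recipExt (hν : IsBackwardShiftMeasure T ν) (hT : IsCompact T)
    (hne : T.Nonempty) (hp : Integrable (fun t ↦ 1 / p t) ν) :
    IntegrableOn (recipExt T p) (Ioc (sInf T) (sSup T)) := by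
  obtain ⟨h_meas, h_map⟩ := hν.map_tsCeil hT hne
  rw [← h_map] at hp
  refine (hp.comp_aemeasurable h_meas).ofReal.congr
    (ae_restrict_of_forall_mem measurableSet_Ioc fun t ht ↦ ?_)
  rw [recipExt_eq, tsCeil_tsKappa hT hne ht]
  rfl

theorem locallyIntegrable_recipExt (hν : IsBackwardShiftMeasure T ν) (hT : IsCompact T)
    (hne : T.Nonempty) (hp : Integrable (fun t ↦ 1 / p t) ν) :
    LocallyIntegrable (recipExt T p) := by
  have hK := isCompact_tsKappa hT
  have hKne := nonempty_tsKappa hT hne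
  have h_below : ∀ t, t ≤ sInf T → recipExt T p t = ((1 / p (sInf (tsKappa T)) : ℝ) : ℂ) := by
    intro t ht
    rw [recipExt_eq, tsCeil_of_le_sInf hK hKne (ht.trans ?_)]
    exact csInf_le hT.bddBelow (tsKappa_subset hT (hK.sInf_mem hKne))
  have h_above : ∀ t, sSup T < t → recipExt T p t = ((1 / p (sSup (tsKappa T)) : ℝ) : ℂ) := by
    intro t ht
    rw [recipExt_eq, tsCeil_of_sSup_lt hK.bddAbove ((sSup_tsKappa hT hne).trans_lt ht)]
  refine locallyIntegrable_of_integrableOn_Ioc fun c x _ ↦ ?_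
  have h_left : IntegrableOn (recipExt T p) (Ioc c (sInf T)) :=
    (integrableOn_const (by simp)).congr_fun (fun t ht ↦ (h_below t ht.2).symm) measurableSet_Ioc
  have h_right : IntegrableOn (recipExt T p) (Ioc (sSup T) x) :=
    (integrableOn_const (by simp)).congr_fun (fun t ht ↦ (h_above t ht.1).symm) measurableSet_Ioc
  refine ((h_left.union (integrableOn_recipExt hν hT hne hp)).union h_right).mono_set fun t ht ↦ ?_
  simp only [mem_union, mem_Ioc]
  grind

theorem ae_recipExt_ne_zero (hν : IsBackwardShiftMeasure T ν) (hT : IsCompact T)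
    (hne : T.Nonempty) (hp : ∀ᵐ t ∂ν, p t ≠ 0) :
    ∀ᵐ t, t ∈ Ioc (sInf T) (sSup T) → recipExt T p t ≠ 0 := by
  obtain ⟨h_meas, h_map⟩ := hν.map_tsCeil hT hne
  rw [← h_map] at hp
  filter_upwards [(ae_restrict_iff' measurableSet_Ioc).1 (ae_of_ae_map h_meas hp)] with t ht ht_mem
  rw [recipExt_eq, tsCeil_tsKappa hT hne ht_mem]
  exact_mod_cast one_div_ne_zero (ht ht_mem)

end RecipExt

end TimeScale

/-! ### Regular Sturm–Liouville problems on a time scale -/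

/-- Data of a regular Sturm–Liouville expression on a compact time scale `T` with more than three
points: `μ` is the measure `dσ_κ`, and the coefficients `1 / p̄`, `r`, `q` are integrable with
`1 / p̄ ≠ 0` and `r > 0` almost everywhere. -/
structure IsRegularSL (T : Set ℝ) (μ : Measure ℝ) (p r q : ℝ → ℝ) : Prop where
  isCompact : IsCompact T
  nonempty : T.Nonempty
  isForwardShiftMeasure : IsForwardShiftMeasure (tsKappa T) μ
  exists_mem_Ioo : ∃ x ∈ tsKappa T, x ∈ Ioo (sInf (tsKappa T)) (sSup (tsKappa T))
  locallyIntegrable_recipExt : LocallyIntegrable (recipExt T p)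
  ae_recipExt_ne_zero : ∀ᵐ t, t ∈ Ioc (sInf T) (sSup T) → recipExt T p t ≠ 0
  integrable_r : Integrable r μ
  integrable_q : Integrable q μ
  r_pos : ∀ᵐ t ∂μ, 0 < r t

theorem isRegularSL_of_integrable {T : Set ℝ} {μ ν : Measure ℝ} {p r q : ℝ → ℝ} (hT : IsCompact T)
    (h_card : ∃ s : Finset ℝ, ↑s ⊆ T ∧ 4 ≤ s.card) (hμ : IsForwardShiftMeasure (tsKappa T) μ)
    (hν : IsBackwardShiftMeasure T ν) (hr : Integrable r (μ.restrict (tsKappa T)))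
    (hr_pos : ∀ᵐ t ∂μ, 0 < r t) (hq : Integrable q (μ.restrict (tsKappa T)))
    (hp_ne : ∀ᵐ t ∂ν, p t ≠ 0) (hp : Integrable (fun t ↦ 1 / p t) ν) :
    IsRegularSL T μ p r q := by
  obtain ⟨x, hx, hx_mem⟩ := exists_mem_tsKappa_mem_Ioo hT h_card
  have hne : T.Nonempty := ⟨x, tsKappa_subset hT hx⟩
  rw [hμ.restrict_eq_self (isCompact_tsKappa hT).isClosed] at hr hq
  exact ⟨hT, hne, hμ, ⟨x, hx, hx_mem⟩, locallyIntegrable_recipExt hν hT hne hp,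
    ae_recipExt_ne_zero hν hT hne hp_ne, hr, hq, hr_pos⟩

theorem isPair_iff {T : Set ℝ} {μ : Measure ℝ} {p : ℝ → ℝ} {u u1 h : ℝ → ℂ} :
    IsPair T μ (cR p) u u1 h ↔
      (∀ c x, c ≤ x → u x = u c + ∫ t in Ioc c x, recipExt T p t * u1 t) ∧
      ∀ c x, c ≤ x → u1 x = u1 c + ∫ t in Ioc c x, h t ∂μ := by
  simp only [IsPair, imp_and, forall_and, div_eq_inv_mul, recipExt]
  refine and_congr_left' (forall₃_congr fun c x hcx ↦ ?_)
  rw [intervalIntegral.integral_of_le hcx]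

theorem memL2T_of_memLp {T : Set ℝ} {μ : Measure ℝ} {r : ℝ → ℝ} {u : ℝ → ℂ}
    (hr : AEMeasurable r (μ.restrict (tsKappa T))) (hu : MemLp u 2 (wM T μ r)) :
    MemL2T T μ r u := by
  have h_fin := lintegral_rpow_enorm_lt_top_of_eLpNorm_lt_top two_ne_zero ENNReal.ofNat_ne_top hu.2
  rw [wM, lintegral_withDensity_eq_lintegral_mul_non_measurable₀ _ hr.ennreal_ofReal
    (Eventually.of_forall fun _ ↦ ENNReal.ofReal_lt_top)] at h_fin
  refine (lintegral_congr fun t ↦ ?_).trans_lt h_fin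
  simp [sqWeight, mul_comm, enorm_eq_nnnorm]

namespace IsRegularSL

variable {T : Set ℝ} {μ : Measure ℝ} {p r q : ℝ → ℝ} {u u1 h : ℝ → ℂ} {z : ℂ}

theorem isFiniteMeasure (hT : IsRegularSL T μ p r q) : IsFiniteMeasure μ :=
  hT.isForwardShiftMeasure.isFiniteMeasure (isCompact_tsKappa hT.isCompact)

theorem restrict_tsKappa (hT : IsRegularSL T μ p r q) : μ.restrict (tsKappa T) = μ :=
  hT.isForwardShiftMeasure.restrict_eq_self (isCompact_tsKappa hT.isCompact).isClosed

theorem ae_mem_Icc (hT : IsRegularSL T μ p r q) :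
    ∀ᵐ t ∂μ, t ∈ Icc (tsSigma T (sInf T)) (sSup T) := by
  have hK := isCompact_tsKappa hT.isCompact
  rw [← sInf_tsKappa hT.isCompact hT.nonempty, ← sSup_tsKappa hT.isCompact hT.nonempty]
  filter_upwards [mem_ae_iff.2 (hT.isForwardShiftMeasure.measure_compl_eq_zero hK.isClosed)]
    with t ht
  exact ⟨csInf_le hK.bddBelow ht, le_csSup hK.bddAbove ht⟩

theorem wM_eq (hT : IsRegularSL T μ p r q) :
    wM T μ r = μ.withDensity fun t ↦ ENNReal.ofReal (r t) := by
  rw [wM, hT.restrict_tsKappa]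

theorem isFiniteMeasure_wM (hT : IsRegularSL T μ p r q) : IsFiniteMeasure (wM T μ r) :=
  hT.wM_eq ▸ isFiniteMeasure_withDensity_ofReal hT.integrable_r.2

theorem ae_wM (hT : IsRegularSL T μ p r q) : ae (wM T μ r) = ae μ := by
  rw [hT.wM_eq]
  refine le_antisymm (withDensity_absolutelyContinuous _ _).ae_le
    (withDensity_absolutelyContinuous' hT.integrable_r.aemeasurable.ennreal_ofReal ?_).ae_le
  filter_upwards [hT.r_pos] with t ht using (ENNReal.ofReal_pos.2 ht).ne'

theorem exists_ae_norm_le (hT : IsRegularSL T μ p r q) (hu : Continuous u) :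
    ∃ C, ∀ᵐ t ∂μ, ‖u t‖ ≤ C := by
  obtain ⟨C, hC⟩ := isCompact_Icc.exists_bound_of_continuousOn hu.continuousOn
  exact ⟨C, hT.ae_mem_Icc.mono hC⟩

theorem memLp_of_continuous (hT : IsRegularSL T μ p r q) (hu : Continuous u) :
    MemLp u 2 (wM T μ r) := by
  have := hT.isFiniteMeasure_wM
  obtain ⟨C, hC⟩ := hT.exists_ae_norm_le hu
  rw [← hT.ae_wM] at hC
  exact .of_bound hu.aestronglyMeasurable C hC

theorem integrable_mul_continuous (hT : IsRegularSL T μ p r q) (hh : Integrable h μ)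
    (hu : Continuous u) : Integrable (fun t ↦ h t * u t) μ := by
  obtain ⟨C, hC⟩ := hT.exists_ae_norm_le hu
  exact hh.mul_bdd (c := C) hu.aestronglyMeasurable hC

theorem integrable_coe_mul (hT : IsRegularSL T μ p r q) {f : ℝ → ℂ} (hf : MemLp f 2 (wM T μ r)) :
    Integrable (fun t ↦ r t * f t) μ := by
  have := hT.isFiniteMeasure_wM
  have hf_int : Integrable f (wM T μ r) := hf.integrable one_le_two
  rw [hT.wM_eq, integrable_withDensity_iff_integrable_smul₀'
    hT.integrable_r.aemeasurable.ennreal_ofReal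
    (Eventually.of_forall fun _ ↦ ENNReal.ofReal_lt_top)] at hf_int
  refine hf_int.congr ?_
  filter_upwards [hT.r_pos] with t ht
  rw [ENNReal.toReal_ofReal ht.le, Complex.real_smul]

theorem integrable_potential (hT : IsRegularSL T μ p r q) (z : ℂ) :
    Integrable (fun t ↦ q t - z * r t) μ :=
  hT.integrable_q.ofReal.sub (hT.integrable_r.ofReal.const_mul z)

theorem isQuasiPair_of_isSLSol (hT : IsRegularSL T μ p r q)
    (hu : IsSLSol T μ (cR p) (cR r) (cR q) z 0 u u1) :
    IsQuasiPair μ (recipExt T p) u u1 (fun t ↦ (q t - z * r t) * u t) := by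
  have := hT.isFiniteMeasure
  obtain ⟨hu_fst, hu_snd⟩ := isPair_iff.1 hu
  simp only [Pi.zero_apply, mul_zero, sub_zero] at hu_snd
  exact .of_eq_add hT.locallyIntegrable_recipExt (hT.integrable_potential z).locallyIntegrable
    hu_fst hu_snd

/- In a gap of `𝕋_κ` the coefficient `p̄` is constant, so a pair with constant quasi-derivative is
affine there and vanishes with its values at the two ends. -/
theorem eqOn_zero_of_eqOn_tsKappa {a : ℂ} {x : ℝ} (hT : IsCompact T)
    (hu : IsPrimitive volume u (fun t ↦ recipExt T p t * a)) (hx : x ∈ tsKappa T)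
    (hux : ∀ t ∈ tsKappa T, t ≤ x → u t = 0) :
    ∀ t ∈ Icc (sInf (tsKappa T)) x, u t = 0 := by
  intro t ht
  have hK := isCompact_tsKappa hT
  by_cases htK : t ∈ tsKappa T
  · exact hux t htK ht.2
  have ht_sup : t ≤ sSup (tsKappa T) := ht.2.trans (le_csSup hK.bddAbove hx)
  obtain ⟨s, hs, hst, h_const⟩ := exists_gap hK ⟨x, hx⟩ htK ⟨ht.1, ht_sup⟩
  set s' := tsCeil (tsKappa T) t
  have h_affine : ∀ y ∈ Ioc s s', u y = (y - s : ℝ) * (((1 / p s' : ℝ) : ℂ) * a) := by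
    intro y hy
    have h_coeff : EqOn (fun t ↦ recipExt T p t * a) (fun _ ↦ ((1 / p s' : ℝ) : ℂ) * a)
        (Ioc s y) := fun t ht ↦ by
      simp only [recipExt_eq, h_const t ⟨ht.1, ht.2.trans hy.2⟩]
    rw [hu.eq_add s y hy.1.le, hux s hs (hst.le.trans ht.2), zero_add,
      setIntegral_congr_fun measurableSet_Ioc h_coeff, setIntegral_const,
      Real.volume_real_Ioc_of_le hy.1.le, Complex.real_smul]
  have hts' : t ≤ s' := le_tsCeil ht_sup
  have h_slope := h_affine s' ⟨hst.trans_le hts', le_rfl⟩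
  rw [hux s' (tsCeil_mem hK ⟨x, hx⟩ t) (tsCeil_le hx ht.2), eq_comm, mul_eq_zero,
    Complex.ofReal_eq_zero, or_iff_right (sub_pos.2 (hst.trans_le hts')).ne'] at h_slope
  rw [h_affine t ⟨hst, hts'⟩, h_slope, mul_zero]

theorem eq_zero_of_ae_eq_zero (hT : IsRegularSL T μ p r q)
    (hu : IsQuasiPair μ (recipExt T p) u u1 (fun t ↦ (q t - z * r t) * u t))
    (hu_ae : ∀ᵐ t ∂μ, u t = 0) (x : ℝ) : u x = 0 ∧ u1 x = 0 := by
  obtain ⟨y, hyK, hy⟩ := hT.exists_mem_Ioo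
  have h_const (t : ℝ) : u1 t = u1 y :=
    hu.snd.eq_of_ae_eq_zero (hu_ae.mono fun t ht ↦ by rw [ht, mul_zero]) y t
  have hu_fst : IsPrimitive volume u (fun t ↦ recipExt T p t * u1 y) :=
    hu.fst.congr_density (funext fun t ↦ by rw [h_const])
  have hu_K : ∀ t ∈ tsKappa T, t ≤ y → u t = 0 := fun t ht hty ↦
    hT.isForwardShiftMeasure.eq_zero_of_ae_eq_zero (isCompact_tsKappa hT.isCompact)
      hu.fst.continuous hu_ae ht (hty.trans_lt hy.2)
  have hu_Icc := eqOn_zero_of_eqOn_tsKappa hT.isCompact hu_fst hyK hu_K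
  have hu1y : u1 y = 0 := by
    have h_pos : volume (Ioo (sInf (tsKappa T)) y) ≠ 0 := by simpa using hy.1
    obtain ⟨t, ht, h_mul, hk⟩ := ((frequently_ae_mem_iff.2 h_pos).and_eventually
      ((hu_fst.ae_eq_zero_of_eqOn_const hu_Icc).and hT.ae_recipExt_ne_zero)).exists
    refine (mul_eq_zero.1 (h_mul ht)).resolve_left (hk ⟨?_, ?_⟩)
    · rw [sInf_tsKappa hT.isCompact hT.nonempty] at ht
      exact (csInf_le hT.isCompact.bddBelow (tsSigma_mem hT.isCompact hT.nonempty _)).trans_lt ht.1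
    · exact (ht.2.trans (sSup_tsKappa hT.isCompact hT.nonempty ▸ hy.2)).le
  exact hu.eq_zero hT.locallyIntegrable_recipExt (hT.integrable_potential z).locallyIntegrable
    (hu_Icc y ⟨hy.1.le, le_rfl⟩) hu1y x

end IsRegularSL

/-! ### The operator with separated boundary conditions -/

section BdryCond

variable {φ x : ℝ} {u u1 v v1 : ℝ → ℂ}

/-- The separated boundary condition at `x` with angle `φ`. -/
def BdryCond (φ : ℝ) (u u1 : ℝ → ℂ) (x : ℝ) : Prop :=
  u x * (Real.cos φ : ℂ) - u1 x * (Real.sin φ : ℂ) = 0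

theorem BdryCond.of_wr_eq_zero (hu : BdryCond φ u u1 x) (hux : ¬ (u x = 0 ∧ u1 x = 0))
    (hW : Wr u u1 v v1 x = 0) : BdryCond φ v v1 x := by
  rw [BdryCond] at hu ⊢
  rw [Wr] at hW
  rcases not_and_or.1 hux with h | h <;> refine (mul_eq_zero.1 ?_).resolve_left h
  · linear_combination v x * hu - (Real.sin φ : ℂ) * hW
  · linear_combination v1 x * hu - (Real.cos φ : ℂ) * hW

theorem BdryCond.of_eq_mul {c : ℂ} (hu : BdryCond φ u u1 x) (hv : v x = c * u x)
    (hv1 : v1 x = c * u1 x) : BdryCond φ v v1 x := by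
  rw [BdryCond] at hu ⊢
  rw [hv, hv1]
  linear_combination c * hu

theorem bdryCond_of_eq_zero (hu : u x = 0 ∧ u1 x = 0) : BdryCond φ u u1 x := by
  simp [BdryCond, hu]

end BdryCond

/-- `S` is the realization in `L²(𝕋_κ; r dσ_κ)` of the expression with coefficients `p`, `r`, `q`,
subject to the separated boundary conditions with angles `φα` at `σ(a)` and `φβ` at `b`. -/
def IsSeparatedRealization (T : Set ℝ) (μ : Measure ℝ) (p r q : ℝ → ℝ) (φα φβ : ℝ)
    (S : Lp ℂ 2 (wM T μ r) →ₗ.[ℂ] Lp ℂ 2 (wM T μ r)) : Prop :=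
  ∀ F G : Lp ℂ 2 (wM T μ r), (F, G) ∈ S.graph ↔
    ∃ u u1 h : ℝ → ℂ, MemD2 T μ p r q u u1 h ∧
      (∀ᵐ t ∂(wM T μ r), F t = u t) ∧
      (∀ᵐ t ∂(wM T μ r), G t = ellApply r q h u t) ∧
      BdryCond φα u u1 (tsSigma T (sInf T)) ∧ BdryCond φβ u u1 (sSup T)

theorem eq_zero_of_mem_graph_smul {𝕜 E : Type*} [RCLike 𝕜] [NormedAddCommGroup E]
    [InnerProductSpace 𝕜 E] {S : E →ₗ.[𝕜] E} (hS : S.IsFormalAdjoint S) {z : 𝕜}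
    (hz : RCLike.im z ≠ 0) {G : E} (hG : (G, z • G) ∈ S.graph) : G = 0 := by
  obtain ⟨y, rfl : (y : E) = G, hSy⟩ := S.mem_graph_iff.1 hG
  have h_symm := hS y y
  rw [hSy, inner_smul_left, inner_smul_right] at h_symm
  by_contra hy
  exact hz (RCLike.conj_eq_iff_im.1 (mul_right_cancel₀ (inner_self_ne_zero.2 hy) h_symm))

theorem eq_of_mem_graph_smul_add {𝕜 E : Type*} [RCLike 𝕜] [NormedAddCommGroup E]
    [InnerProductSpace 𝕜 E] {S : E →ₗ.[𝕜] E} (hS : S.IsFormalAdjoint S) {z : 𝕜}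
    (hz : RCLike.im z ≠ 0) {F G H : E} (hG : (G, z • G + F) ∈ S.graph)
    (hH : (H, z • H + F) ∈ S.graph) : G = H := by
  have h_sub := S.graph.sub_mem hG hH
  rw [Prod.mk_sub_mk, add_sub_add_right_eq_sub, ← smul_sub] at h_sub
  exact sub_eq_zero.1 (eq_zero_of_mem_graph_smul hS hz h_sub)

theorem isFormalAdjoint_of_isSelfAdjoint {𝕜 E : Type*} [RCLike 𝕜] [NormedAddCommGroup E]
    [InnerProductSpace 𝕜 E] [CompleteSpace E] {S : E →ₗ.[𝕜] E} (hS : IsSelfAdjoint S) :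
    S.IsFormalAdjoint S := by
  simpa only [LinearPMap.isSelfAdjoint_def.1 hS] using
    LinearPMap.adjoint_isFormalAdjoint hS.dense_domain

namespace IsSeparatedRealization

variable {T : Set ℝ} {μ : Measure ℝ} {p r q : ℝ → ℝ} {φα φβ : ℝ}
  {S : Lp ℂ 2 (wM T μ r) →ₗ.[ℂ] Lp ℂ 2 (wM T μ r)} {u u1 ua ua1 ub ub1 f h : ℝ → ℂ} {z : ℂ}

theorem mem_graph (hS : IsSeparatedRealization T μ p r q φα φβ S) (hT : IsRegularSL T μ p r q)
    (hu : IsQuasiPair μ (recipExt T p) u u1 h) {F G : Lp ℂ 2 (wM T μ r)}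
    (hF : ∀ᵐ t ∂μ, F t = u t) (hG : ∀ᵐ t ∂μ, G t = ellApply r q h u t)
    (huα : BdryCond φα u u1 (tsSigma T (sInf T))) (huβ : BdryCond φβ u u1 (sSup T)) :
    (F, G) ∈ S.graph := by
  have hr : AEMeasurable r (μ.restrict (tsKappa T)) :=
    hT.integrable_r.aemeasurable.mono_measure Measure.restrict_le_self
  rw [← hT.ae_wM] at hF hG
  have h_mem : MemD2 T μ p r q u u1 h :=
    ⟨hu.snd.locallyIntegrable, isPair_iff.2 ⟨hu.fst.eq_add, hu.snd.eq_add⟩,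
      memL2T_of_memLp hr ((Lp.memLp F).ae_eq hF), memL2T_of_memLp hr ((Lp.memLp G).ae_eq hG)⟩
  exact (hS F G).2 ⟨u, u1, h, h_mem, hF, hG, huα, huβ⟩

theorem mem_graph_of_sol (hS : IsSeparatedRealization T μ p r q φα φβ S)
    (hT : IsRegularSL T μ p r q) {F G : Lp ℂ 2 (wM T μ r)}
    (hu : IsQuasiPair μ (recipExt T p) u u1 (fun t ↦ (q t - z * r t) * u t - r t * f t))
    (hF : ∀ᵐ t ∂μ, F t = f t) (hG : ∀ᵐ t ∂μ, G t = u t)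
    (huα : BdryCond φα u u1 (tsSigma T (sInf T))) (huβ : BdryCond φβ u u1 (sSup T)) :
    (G, z • G + F) ∈ S.graph := by
  refine hS.mem_graph hT hu hG ?_ huα huβ
  have h_smul := Lp.coeFn_smul z G
  have h_add := Lp.coeFn_add (z • G) F
  rw [EventuallyEq, hT.ae_wM] at h_smul h_add
  filter_upwards [hF, hG, h_smul, h_add, hT.r_pos] with t hFt hGt h_smul_t h_add_t hrt
  have hrt' : (r t : ℂ) ≠ 0 := Complex.ofReal_ne_zero.2 hrt.ne'
  rw [h_add_t, Pi.add_apply, h_smul_t, Pi.smul_apply, smul_eq_mul, hFt, hGt, ellApply,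
    eq_div_iff hrt']
  ring

/- If `σ(a)` were an atom, a pair living on its left would put some `(0, G)` with `G ≠ 0` into the
graph. -/
theorem measure_singleton_eq_zero (hS : IsSeparatedRealization T μ p r q φα φβ S)
    (hT : IsRegularSL T μ p r q) : μ {tsSigma T (sInf T)} = 0 := by
  set α := tsSigma T (sInf T)
  have := hT.isFiniteMeasure
  have := hT.isFiniteMeasure_wM
  have hα_mem := tsSigma_mem hT.isCompact hT.nonempty (sInf T)
  have hδ_int : Integrable (indicator {α} (1 : ℝ → ℂ)) μ :=
    (integrable_const 1).indicator (measurableSet_singleton α)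
  obtain ⟨u, u1, hu, hu_zero⟩ := IsQuasiPair.exists_eqOn_zero_Ici (α := α)
    hT.locallyIntegrable_recipExt hδ_int fun t ht ↦
      indicator_of_notMem (s := {α}) ht.ne' _
  have hG_mem : MemLp (indicator {α} fun _ ↦ (r α : ℂ)⁻¹) 2 (wM T μ r) :=
    memLp_indicator_const 2 (measurableSet_singleton α) _ (.inr (measure_ne_top _ _))
  have hG := hG_mem.coeFn_toLp
  have h_zero := Lp.coeFn_zero ℂ 2 (wM T μ r)
  have hu_ae : ∀ᵐ t ∂μ, u t = 0 := hT.ae_mem_Icc.mono fun t ht ↦ (hu_zero t ht.1).1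
  rw [EventuallyEq, hT.ae_wM] at hG h_zero
  have h_graph : ((0 : Lp ℂ 2 (wM T μ r)), hG_mem.toLp) ∈ S.graph := by
    refine hS.mem_graph hT hu ?_ ?_ (bdryCond_of_eq_zero (hu_zero α le_rfl))
      (bdryCond_of_eq_zero (hu_zero _ (le_csSup hT.isCompact.bddAbove hα_mem)))
    · filter_upwards [h_zero, hu_ae] with t h_zero_t hut
      rw [h_zero_t, hut, Pi.zero_apply]
    · filter_upwards [hG, hu_ae] with t hGt hut
      rw [hGt, ellApply, hut]
      rcases eq_or_ne t α with rfl | ht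
      · simp
      · simp [ht]
  rw [S.graph_fst_eq_zero_snd h_graph rfl] at hG
  rw [measure_eq_zero_iff_ae_notMem]
  filter_upwards [hG, h_zero, hT.r_pos] with t hGt h_zero_t hrt ht
  rw [indicator_of_mem ht, h_zero_t, Pi.zero_apply, eq_comm, inv_eq_zero,
    ← mem_singleton_iff.1 ht] at hGt
  exact hrt.ne' (Complex.ofReal_eq_zero.1 hGt)

theorem measure_Iic_eq_zero (hS : IsSeparatedRealization T μ p r q φα φβ S)
    (hT : IsRegularSL T μ p r q) : μ (Iic (tsSigma T (sInf T))) = 0 := by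
  rw [measure_eq_zero_iff_ae_notMem]
  filter_upwards [hT.ae_mem_Icc,
    measure_eq_zero_iff_ae_notMem.1 (hS.measure_singleton_eq_zero hT)] with t ht ht_ne ht_le
  exact ht_ne (le_antisymm ht_le ht.1)

theorem wr_ne_zero (hS : IsSeparatedRealization T μ p r q φα φβ S) (hT : IsRegularSL T μ p r q)
    (hS_symm : S.IsFormalAdjoint S) (hz : z.im ≠ 0)
    (hua : IsQuasiPair μ (recipExt T p) ua ua1 (fun t ↦ (q t - z * r t) * ua t))
    (hub : IsQuasiPair μ (recipExt T p) ub ub1 (fun t ↦ (q t - z * r t) * ub t))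
    (hua_ne : ¬ ∀ x, ua x = 0 ∧ ua1 x = 0) (hub_ne : ¬ ∀ x, ub x = 0 ∧ ub1 x = 0)
    (huα : BdryCond φα ua ua1 (tsSigma T (sInf T))) (huβ : BdryCond φβ ub ub1 (sSup T)) (x : ℝ) :
    Wr ub ub1 ua ua1 x ≠ 0 := by
  intro hW
  have := hT.isFiniteMeasure
  have hub_b : ¬ (ub (sSup T) = 0 ∧ ub1 (sSup T) = 0) := fun h0 ↦
    hub_ne (hub.eq_zero hT.locallyIntegrable_recipExt (hT.integrable_potential z).locallyIntegrable
      h0.1 h0.2)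
  have hua_b : BdryCond φβ ua ua1 (sSup T) :=
    huβ.of_wr_eq_zero hub_b ((hub.wronskian_eq hua _ x).trans hW)
  have hua_mem := hT.memLp_of_continuous hua.fst.continuous
  have h_coe := hua_mem.coeFn_toLp
  have h_zero := Lp.coeFn_zero ℂ 2 (wM T μ r)
  rw [EventuallyEq, hT.ae_wM] at h_coe h_zero
  have h_graph : (hua_mem.toLp, z • hua_mem.toLp + 0) ∈ S.graph :=
    hS.mem_graph_of_sol hT (hua.congr_density (by simp)) h_zero h_coe huα hua_b
  rw [add_zero] at h_graph
  rw [eq_zero_of_mem_graph_smul hS_symm hz h_graph] at h_coe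
  refine hua_ne (hT.eq_zero_of_ae_eq_zero hua ?_)
  filter_upwards [h_coe, h_zero] with t h_coe_t h_zero_t
  rw [← h_coe_t, h_zero_t, Pi.zero_apply]

end IsSeparatedRealization

/-! ### The Green function -/

/-- The Green function, the kernel of the resolvent of `S` against `r dσ_κ`, built from solutions
`ua` and `ub` with Wronskian `W = W(ub, ua)`. -/
noncomputable def greenKernel (W : ℂ) (ua ub : ℝ → ℂ) (x y : ℝ) : ℂ :=
  if x < y then W⁻¹ * ua x * ub y else W⁻¹ * ua y * ub x

/-- The variation-of-constants function built from `ua`, `ub` and the source `Φ`: for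
`(va, vb) = (ua, ub)` it solves the inhomogeneous equation, and for `va`, `vb` the quasi-derivatives
of `ua`, `ub` it is the quasi-derivative of that solution. -/
noncomputable def greenSol (μ : Measure ℝ) (W : ℂ) (ua ub Φ va vb : ℝ → ℂ) (x : ℝ) : ℂ :=
  W⁻¹ * (vb x * ∫ t in Iic x, Φ t * ua t ∂μ + va x * ∫ t in Ioi x, Φ t * ub t ∂μ)

section GreenSol

variable {μ : Measure ℝ} {W : ℂ} {k w ua ua1 ub ub1 Φ va vb : ℝ → ℂ}

theorem integral_greenKernel_mul (hΦa : Integrable (fun t ↦ Φ t * ua t) μ)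
    (hΦb : Integrable (fun t ↦ Φ t * ub t) μ) (x : ℝ) :
    ∫ y, greenKernel W ua ub x y * Φ y ∂μ = greenSol μ W ua ub Φ ua ub x := by
  have h_split : (fun y ↦ greenKernel W ua ub x y * Φ y) =
      fun y ↦ (Iic x).indicator (fun t ↦ W⁻¹ * ub x * (Φ t * ua t)) y +
        (Ioi x).indicator (fun t ↦ W⁻¹ * ua x * (Φ t * ub t)) y := by
    funext y
    rcases lt_or_ge x y with hxy | hyx
    · simp only [greenKernel, hxy, hxy.not_ge, if_true, mem_Iic, mem_Ioi, indicator_of_mem,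
        not_false_eq_true, indicator_of_notMem]
      ring
    · simp only [greenKernel, hyx, hyx.not_gt, if_false, mem_Iic, mem_Ioi, indicator_of_mem,
        not_false_eq_true, indicator_of_notMem]
      ring
  rw [h_split, integral_add ((hΦa.const_mul _).indicator measurableSet_Iic)
    ((hΦb.const_mul _).indicator measurableSet_Ioi), integral_indicator measurableSet_Iic,
    integral_indicator measurableSet_Ioi, integral_const_mul, integral_const_mul, greenSol]
  ring

theorem greenSol_of_measure_Iic_eq_zero {x : ℝ} (hx : μ (Iic x) = 0) :
    greenSol μ W ua ub Φ va vb x = (W⁻¹ * ∫ t in Ioi x, Φ t * ub t ∂μ) * va x := by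
  rw [greenSol, setIntegral_measure_zero _ hx]
  ring

theorem greenSol_of_measure_Ioi_eq_zero {x : ℝ} (hx : μ (Ioi x) = 0) :
    greenSol μ W ua ub Φ va vb x = (W⁻¹ * ∫ t in Iic x, Φ t * ua t ∂μ) * vb x := by
  rw [greenSol, setIntegral_measure_zero _ hx]
  ring

theorem isQuasiPair_greenSol [SFinite μ] (hua : IsQuasiPair μ k ua ua1 (fun t ↦ w t * ua t))
    (hub : IsQuasiPair μ k ub ub1 (fun t ↦ w t * ub t)) (hW : ∀ x, Wr ub ub1 ua ua1 x = W)
    (hW_ne : W ≠ 0) (hΦa : Integrable (fun t ↦ Φ t * ua t) μ)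
    (hΦb : Integrable (fun t ↦ Φ t * ub t) μ) :
    IsQuasiPair μ k (greenSol μ W ua ub Φ ua ub) (greenSol μ W ua ub Φ ua1 ub1)
      (fun t ↦ w t * greenSol μ W ua ub Φ ua ub t - Φ t) := by
  refine ((hub.variation_of_constants hua (.of_setIntegral_Iic hΦa)
    (.of_setIntegral_Ioi hΦb)).const_mul W⁻¹).congr_density (funext fun t ↦ ?_)
  rw [hW, mul_sub, inv_mul_cancel_left₀ hW_ne, greenSol]
  ring

end GreenSol

theorem IsSeparatedRealization.exists_mem_graph_greenKernel {T : Set ℝ} {μ : Measure ℝ}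
    {p r q : ℝ → ℝ} {φα φβ : ℝ} {S : Lp ℂ 2 (wM T μ r) →ₗ.[ℂ] Lp ℂ 2 (wM T μ r)}
    {ua ua1 ub ub1 : ℝ → ℂ} {z W : ℂ} (hS : IsSeparatedRealization T μ p r q φα φβ S)
    (hT : IsRegularSL T μ p r q)
    (hua : IsQuasiPair μ (recipExt T p) ua ua1 (fun t ↦ (q t - z * r t) * ua t))
    (hub : IsQuasiPair μ (recipExt T p) ub ub1 (fun t ↦ (q t - z * r t) * ub t))
    (huα : BdryCond φα ua ua1 (tsSigma T (sInf T))) (huβ : BdryCond φβ ub ub1 (sSup T))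
    (hW : ∀ x, Wr ub ub1 ua ua1 x = W) (hW_ne : W ≠ 0) (F : Lp ℂ 2 (wM T μ r)) :
    ∃ G : Lp ℂ 2 (wM T μ r), (G, z • G + F) ∈ S.graph ∧
      ∀ᵐ x ∂μ, G x = ∫ y, greenKernel W ua ub x y * (r y * F y) ∂μ := by
  have := hT.isFiniteMeasure
  have hΦ := hT.integrable_coe_mul (Lp.memLp F)
  have hΦa := hT.integrable_mul_continuous hΦ hua.fst.continuous
  have hΦb := hT.integrable_mul_continuous hΦ hub.fst.continuous
  have hg := isQuasiPair_greenSol hua hub hW hW_ne hΦa hΦb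
  have hg_mem := hT.memLp_of_continuous hg.fst.continuous
  have h_coe := hg_mem.coeFn_toLp
  rw [EventuallyEq, hT.ae_wM] at h_coe
  have hα_null := hS.measure_Iic_eq_zero hT
  have hβ_null : μ (Ioi (sSup T)) = 0 :=
    measure_eq_zero_iff_ae_notMem.2 (hT.ae_mem_Icc.mono fun t ht ↦ ht.2.not_gt)
  simp only [integral_greenKernel_mul hΦa hΦb]
  refine ⟨hg_mem.toLp, hS.mem_graph_of_sol hT hg (.of_forall fun _ ↦ rfl) h_coe ?_ ?_, h_coe⟩
  · exact huα.of_eq_mul (greenSol_of_measure_Iic_eq_zero hα_null)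
      (greenSol_of_measure_Iic_eq_zero hα_null)
  · exact huβ.of_eq_mul (greenSol_of_measure_Ioi_eq_zero hβ_null)
      (greenSol_of_measure_Ioi_eq_zero hβ_null)

/-- Resolvent of the self-adjoint operator with separated boundary conditions on a bounded
time scale: for `z ∈ ℂ \ ℝ` and nontrivial solutions `u_a`, `u_b` of `(ℓ - z)u = 0`
satisfying the boundary condition at `σ(a)` resp. at `b`, the Wronskian `W(u_b, u_a)` is a
nonzero constant, and for every `f ∈ L²(𝕋_κ; r dσ_κ)` the unique `g ∈ dom S` with
`(S - z) g = f` is given by the Green function formula. -/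
theorem resolvent_green_function_separated
    (T : Set ℝ) (hne : T.Nonempty) (hcl : IsClosed T)
    (hbb : BddBelow T) (hba : BddAbove T)
    (hfive : ∃ s : Finset ℝ, ↑s ⊆ T ∧ 5 ≤ s.card)
    (μ ν : Measure ℝ)
    (hμ : ∀ c d : ℝ, c ≤ d →
      μ (Set.Ioc c d) = ENNReal.ofReal (tsSigma (tsKappa T) d - tsSigma (tsKappa T) c))
    (hν : ∀ c d : ℝ, c ≤ d → ν (Set.Ico c d) = ENNReal.ofReal (tsRho T d - tsRho T c))
    (p r q : ℝ → ℝ)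
    (hr : Integrable r (μ.restrict (tsKappa T))) (hrpos : ∀ᵐ t ∂μ, 0 < r t)
    (hq : Integrable q (μ.restrict (tsKappa T)))
    (hpne : ∀ᵐ t ∂ν, p t ≠ 0) (hp : Integrable (fun t => 1 / p t) ν)
    (φα φβ : ℝ) (hφα : 0 ≤ φα ∧ φα < Real.pi) (hφβ : 0 ≤ φβ ∧ φβ < Real.pi)
    (hα : tsSigma T (sInf T) < tsSigma T (tsSigma T (sInf T)) → φα ≠ 0)
    (hβ : tsRho T (sSup T) < tsSigma T (tsRho T (sSup T)) →
      p (sSup T) * Real.sin φβ ≠ (sSup T - tsRho T (sSup T)) * Real.cos φβ)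
    (S : Lp ℂ 2 (wM T μ r) →ₗ.[ℂ] Lp ℂ 2 (wM T μ r))
    (hSsa : IsSelfAdjoint S)
    (hSgraph : ∀ F G : Lp ℂ 2 (wM T μ r), (F, G) ∈ S.graph ↔
      ∃ u u1 h : ℝ → ℂ, MemD2 T μ p r q u u1 h ∧
        (∀ᵐ t ∂(wM T μ r), F t = u t) ∧
        (∀ᵐ t ∂(wM T μ r), G t = ellApply r q h u t) ∧
        u (tsSigma T (sInf T)) * (Real.cos φα : ℂ) -
          u1 (tsSigma T (sInf T)) * (Real.sin φα : ℂ) = 0 ∧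
        u (sSup T) * (Real.cos φβ : ℂ) - u1 (sSup T) * (Real.sin φβ : ℂ) = 0)
    (z : ℂ) (hz : z.im ≠ 0) (ua ua1 ub ub1 : ℝ → ℂ)
    (hua : IsSLSol T μ (cR p) (cR r) (cR q) z 0 ua ua1)
    (hub : IsSLSol T μ (cR p) (cR r) (cR q) z 0 ub ub1)
    (hua0 : ¬ ∀ x : ℝ, ua x = 0 ∧ ua1 x = 0) (hub0 : ¬ ∀ x : ℝ, ub x = 0 ∧ ub1 x = 0)
    (huaBC : ua (tsSigma T (sInf T)) * (Real.cos φα : ℂ) -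
      ua1 (tsSigma T (sInf T)) * (Real.sin φα : ℂ) = 0)
    (hubBC : ub (sSup T) * (Real.cos φβ : ℂ) - ub1 (sSup T) * (Real.sin φβ : ℂ) = 0) :
    (∀ x : ℝ, Wr ub ub1 ua ua1 x = Wr ub ub1 ua ua1 0) ∧
    Wr ub ub1 ua ua1 0 ≠ 0 ∧
    ∀ F : Lp ℂ 2 (wM T μ r),
      (∃! G : Lp ℂ 2 (wM T μ r), (G, z • G + F) ∈ S.graph) ∧
      ∀ G : Lp ℂ 2 (wM T μ r), (G, z • G + F) ∈ S.graph →
        ∀ᵐ x ∂(μ.restrict (tsKappa T)),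
          G x = ∫ y in tsKappa T,
            (if x < y then (Wr ub ub1 ua ua1 0)⁻¹ * ua x * ub y
              else (Wr ub ub1 ua ua1 0)⁻¹ * ua y * ub x) * F y * (r y : ℂ) ∂μ := by
  have hT : IsRegularSL T μ p r q :=
    isRegularSL_of_integrable (Metric.isCompact_of_isClosed_isBounded hcl (hbb.isBounded hba))
      (hfive.imp fun s hs ↦ ⟨hs.1, Nat.le_of_succ_le hs.2⟩) hμ hν hr hrpos hq hpne hp
  have hS : IsSeparatedRealization T μ p r q φα φβ S := hSgraph
  have hS_symm := isFormalAdjoint_of_isSelfAdjoint hSsa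
  have hua_pair := hT.isQuasiPair_of_isSLSol hua
  have hub_pair := hT.isQuasiPair_of_isSLSol hub
  have := hT.isFiniteMeasure
  have hW : ∀ x, Wr ub ub1 ua ua1 x = Wr ub ub1 ua ua1 0 := fun x ↦
    hub_pair.wronskian_eq hua_pair x 0
  have hW_ne := hS.wr_ne_zero hT hS_symm hz hua_pair hub_pair hua0 hub0 huaBC hubBC 0
  refine ⟨hW, hW_ne, fun F ↦ ?_⟩
  obtain ⟨G₀, hG₀, h_green⟩ :=
    hS.exists_mem_graph_greenKernel hT hua_pair hub_pair huaBC hubBC hW hW_ne F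
  have h_unique : ∀ G, (G, z • G + F) ∈ S.graph → G = G₀ := fun G hG ↦
    eq_of_mem_graph_smul_add hS_symm hz hG hG₀
  refine ⟨⟨G₀, hG₀, h_unique⟩, fun G hG ↦ ?_⟩
  rw [h_unique G hG, hT.restrict_tsKappa]
  filter_upwards [h_green] with x hx
  simpa only [greenKernel, mul_assoc, mul_comm (r _ : ℂ)] using hx
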